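/- There exists a universal constant C > 0 such that whenever k < (2^ℓ/12)^{2/7}, the distribution Q_k^O(s_0,...,s_k) = Pr(s_0) · ∫_{O(D)} ∏_{i=1}^k ⟨y^i_{s_0...s_i}| O σ^{i−1}_{s_0...s_{i−1}} Oᵀ |y^i_{s_0...s_i}⟩ λ^i_{s_0...s_i} dO (with dO the Haar probability measure on the compact group O(D) of D×D real orthogonal matrices, acting on ℂ^D via the inclusion of real matrices into complex matrices) satisfies ∑_{(s_0,...,s_k) ∈ {1,...,D_m}^{k+1}} |P_k(s_0,...,s_k) − Q_k^O(s_0,...,s_k)| ≤ C · k³ / 2^ℓ. -/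

import Mathlib

open MeasureTheory Matrix
open scoped ComplexOrder

noncomputable instance {m n α : Type*} [MeasurableSpace α] : MeasurableSpace (Matrix m n α) :=
  inferInstanceAs (MeasurableSpace (m → n → α))

set_option linter.unusedSectionVars false

section CompactGroup

variable {G : Type*} [TopologicalSpace G] [Group G] [IsTopologicalGroup G] [CompactSpace G]
  [MeasurableSpace G] [BorelSpace G] (μ : Measure G) [μ.IsHaarMeasure] [IsProbabilityMeasure μ]

theorem integrable_of_continuous_compactSpace {F : G → ℂ} (hF : Continuous F) :
    Integrable F μ := hF.integrable_of_hasCompactSupport (HasCompactSupport.of_compactSpace F)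

theorem integral_comp_mul_right (F : G → ℂ) (g : G) : ∫ x, F (x * g) ∂μ = ∫ x, F x ∂μ := by
  have hmeas : Measurable (fun x : G => x * g) := (continuous_mul_const g).measurable
  have : IsProbabilityMeasure (μ.map (· * g)) := Measure.isProbabilityMeasure_map hmeas.aemeasurable
  have h : μ.map (· * g) = μ := Measure.isHaarMeasure_eq_of_isProbabilityMeasure _ _
  have : μ.IsMulRightInvariant := ⟨fun g' => by
    have hmeas : Measurable (fun x : G => x * g') := (continuous_mul_const g').measurable
    have : IsProbabilityMeasure (μ.map (· * g')) :=
      Measure.isProbabilityMeasure_map hmeas.aemeasurable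
    exact Measure.isHaarMeasure_eq_of_isProbabilityMeasure _ _⟩
  exact integral_mul_right_eq_self F g

/-- Integration by parts along a one-parameter subgroup of a compact group. -/
theorem integral_eq_zero_of_hasDerivAt_mul_right {F F' : G → ℂ} (hF : Continuous F)
    (hF' : Continuous F') {R : ℝ → G} (hR : R 0 = 1) (hadd : ∀ s t, R (s + t) = R s * R t)
    (h : ∀ x, HasDerivAt (fun t => F (x * R t)) (F' x) 0) : ∫ x, F' x ∂μ = 0 := by
  obtain ⟨K, hK⟩ := (isCompact_range hF'.norm).bddAbove
  have hK' : ∀ x, ‖F' x‖ ≤ K := fun x => hK ⟨x, rfl⟩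
  have hd : ∀ x (t : ℝ), HasDerivAt (fun t => F (x * R t)) (F' (x * R t)) t := by
    intro x t
    have h1 := h (x * R t)
    have h2 : HasDerivAt (fun u : ℝ => u - t) 1 t := (hasDerivAt_id t).sub_const t
    have h3 : HasDerivAt (fun u => F (x * R t * R u)) (F' (x * R t)) (t - t) := by
      simpa using h1
    have h4 := HasDerivAt.scomp (h := fun u : ℝ => u - t) t h3 h2
    simp only [one_smul] at h4
    refine h4.congr_of_eventuallyEq (Filter.Eventually.of_forall fun u => ?_)
    simp only [Function.comp, mul_assoc, ← hadd]
    congr 3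
    ring
  have key := hasDerivAt_integral_of_dominated_loc_of_deriv_le (μ := μ) (x₀ := (0 : ℝ))
    (F := fun t x => F (x * R t)) (F' := fun t x => F' (x * R t)) (bound := fun _ => K)
    (s := Set.univ) Filter.univ_mem
    (Filter.Eventually.of_forall fun t =>
      (integrable_of_continuous_compactSpace μ
        (hF.comp (continuous_mul_const _))).aestronglyMeasurable)
    (integrable_of_continuous_compactSpace μ (hF.comp (continuous_mul_const _)))
    (integrable_of_continuous_compactSpace μ
      (hF'.comp (continuous_mul_const _))).aestronglyMeasurable
    (Filter.Eventually.of_forall fun x t _ => hK' _) (integrable_const K)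
    (Filter.Eventually.of_forall fun x t _ => hd x t)
  have h5 := key.2
  simp only [integral_comp_mul_right μ F, hR, mul_one] at h5
  exact h5.unique (hasDerivAt_const _ _)

end CompactGroup

section OrthogonalGroup

variable {ι : Type*} [Fintype ι] [DecidableEq ι]

instance : BorelSpace (Matrix ι ι ℝ) := inferInstanceAs (BorelSpace (ι → ι → ℝ))

instance : CompactSpace (unitaryGroup ι ℝ) := by
  refine (isCompact_iff_compactSpace (s := (unitaryGroup ι ℝ : Set (Matrix ι ι ℝ)))).mp ?_
  have hK : IsCompact (Set.univ.pi fun _ : ι => Set.univ.pi fun _ : ι => Set.Icc (-1 : ℝ) 1) :=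
    isCompact_univ_pi fun _ => isCompact_univ_pi fun _ => isCompact_Icc
  refine IsCompact.of_isClosed_subset (X := Matrix ι ι ℝ) hK ?_ ?_
  · have : (unitaryGroup ι ℝ : Set (Matrix ι ι ℝ)) = {M | M * star M = 1} := by
      ext M
      exact mem_unitaryGroup_iff
    rw [this]
    exact isClosed_eq (by fun_prop) continuous_const
  · intro M hM i _ j _
    exact abs_le.mp (entry_norm_bound_of_unitary hM i j)

instance : BorelSpace (unitaryGroup ι ℝ) :=
  inferInstanceAs (BorelSpace {M : Matrix ι ι ℝ // M ∈ unitaryGroup ι ℝ})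

/-- The inclusion of real orthogonal matrices into complex matrices. -/
noncomputable def complexify (O : unitaryGroup ι ℝ) : Matrix ι ι ℂ := O.1.map Complex.ofReal

theorem continuous_complexify : Continuous (complexify (ι := ι)) := by
  unfold complexify
  exact continuous_subtype_val.matrix_map Complex.continuous_ofReal

theorem complexify_mul (O P : unitaryGroup ι ℝ) :
    complexify (O * P) = complexify O * complexify P := by
  simp only [complexify, UnitaryGroup.mul_val]
  exact Matrix.map_mul (f := Complex.ofRealHom)

theorem conjTranspose_complexify (O : unitaryGroup ι ℝ) :
    (complexify O)ᴴ = (complexify O)ᵀ := by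
  ext i j
  simp [complexify]

theorem complexify_mul_transpose (O : unitaryGroup ι ℝ) :
    complexify O * (complexify O)ᵀ = 1 := by
  have h : O.1 * O.1ᵀ = 1 := by
    have := mem_unitaryGroup_iff.mp O.2
    rwa [star_eq_conjTranspose, conjTranspose_eq_transpose_of_trivial] at this
  have h2 := congrArg (fun M : Matrix ι ι ℝ => M.map Complex.ofRealHom) h
  simp only [Matrix.map_mul] at h2
  rw [Matrix.map_one _ (map_zero _) (map_one _)] at h2
  exact h2

theorem complexify_transpose_mul (O : unitaryGroup ι ℝ) :
    (complexify O)ᵀ * complexify O = 1 :=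
  mul_eq_one_comm.mp (complexify_mul_transpose O)

/-- The pairing `tr (X O σ Oᵀ)`. -/
noncomputable def conjPairing (X σ : Matrix ι ι ℂ) (O : unitaryGroup ι ℝ) : ℂ :=
  (X * complexify O * σ * (complexify O)ᵀ).trace

theorem continuous_conjPairing (X σ : Matrix ι ι ℂ) : Continuous (conjPairing X σ) := by
  unfold conjPairing
  have := continuous_complexify (ι := ι)
  fun_prop

/-- The infinitesimal rotation in the coordinate plane `(a, b)`. -/
def rotGen (a b : ι) : Matrix ι ι ℝ := Matrix.single a b 1 - Matrix.single b a 1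

theorem rotGen_transpose (a b : ι) : (rotGen a b)ᵀ = -rotGen a b := by
  simp [rotGen]

theorem rotGen_cube (a b : ι) : rotGen a b * rotGen a b * rotGen a b = -rotGen a b := by
  unfold rotGen
  by_cases h : a = b
  · subst h; simp
  · have h' : b ≠ a := fun e => h e.symm
    simp only [sub_mul, mul_sub, Matrix.single_mul_single_same, ne_eq, h, h', not_false_eq_true,
      Matrix.single_mul_single_of_ne, mul_one, sub_zero, zero_sub, neg_mul, sub_neg_eq_add]
    abel

/-- Rotation by the angle `t` in the coordinate plane `(a, b)`. -/
noncomputable def rotMatrix (a b : ι) (t : ℝ) : Matrix ι ι ℝ :=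
  1 + Real.sin t • rotGen a b + (1 - Real.cos t) • (rotGen a b * rotGen a b)

theorem rotMatrix_add (a b : ι) (s t : ℝ) :
    rotMatrix a b (s + t) = rotMatrix a b s * rotMatrix a b t := by
  have h3 := rotGen_cube a b
  unfold rotMatrix
  set A := rotGen a b
  have h3' : A * (A * A) = -A := by rw [← mul_assoc, h3]
  have h4 : A * A * (A * A) = -(A * A) := by rw [← mul_assoc, h3, neg_mul]
  simp only [add_mul, mul_add, one_mul, mul_one, smul_mul_assoc, mul_smul_comm, h3,
    h3', h4, Real.sin_add, Real.cos_add]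
  module

theorem rotMatrix_zero (a b : ι) : rotMatrix a b 0 = 1 := by simp [rotMatrix]

theorem rotMatrix_transpose (a b : ι) (t : ℝ) : (rotMatrix a b t)ᵀ = rotMatrix a b (-t) := by
  simp [rotMatrix, rotGen_transpose]

/-- Rotation by the angle `t` in the coordinate plane `(a, b)`, as an orthogonal matrix. -/
noncomputable def rot (a b : ι) (t : ℝ) : unitaryGroup ι ℝ :=
  ⟨rotMatrix a b t, by
    rw [mem_unitaryGroup_iff, star_eq_conjTranspose, conjTranspose_eq_transpose_of_trivial,
      rotMatrix_transpose, ← rotMatrix_add, add_neg_cancel, rotMatrix_zero]⟩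

/-- The complex version of `rotGen`. -/
noncomputable def rotGenC (a b : ι) : Matrix ι ι ℂ := Matrix.single a b 1 - Matrix.single b a 1

theorem complexify_rot (a b : ι) (t : ℝ) : complexify (rot a b t) =
    1 + (Real.sin t : ℂ) • rotGenC a b + (1 - Real.cos t : ℂ) • (rotGenC a b * rotGenC a b) := by
  have h : (rotGen a b).map Complex.ofRealHom = rotGenC a b := by
    ext i j
    simp only [rotGen, rotGenC, Matrix.map_apply, Matrix.sub_apply, Matrix.single_apply, map_sub]
    split_ifs <;> simp
  rw [← h, ← Matrix.map_mul]
  ext i j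
  simp only [complexify, rot, rotMatrix, Matrix.one_apply, Matrix.map_apply, Matrix.add_apply,
    Matrix.smul_apply, smul_eq_mul, Complex.ofReal_add, Complex.ofReal_mul, Complex.ofReal_sub,
    Complex.ofReal_one, Complex.ofRealHom_eq_coe]
  split_ifs <;> simp

theorem hasDerivAt_conjPairing_rot (X σ : Matrix ι ι ℂ) (a b : ι) (O : unitaryGroup ι ℝ) :
    HasDerivAt (fun t => conjPairing X σ (O * rot a b t))
      (conjPairing X (rotGenC a b * σ - σ * rotGenC a b) O) 0 := by
  have hT : (rotGenC a b)ᵀ = -rotGenC a b := by simp [rotGenC]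
  set A := rotGenC a b with hA
  have hs : HasDerivAt (fun t : ℝ => (Real.sin t : ℂ)) 1 0 := by
    simpa using (Real.hasDerivAt_sin 0).ofReal_comp
  have hc : HasDerivAt (fun t : ℝ => (1 - Real.cos t : ℂ)) 0 0 := by
    simpa using ((Real.hasDerivAt_cos 0).ofReal_comp).const_sub 1
  set u : ℝ → ℂ := fun t => (Real.sin t : ℂ)
  set v : ℝ → ℂ := fun t => (1 - Real.cos t : ℂ)
  have hexp : ∀ t, conjPairing X σ (O * rot a b t) =
      conjPairing X σ O + u t * conjPairing X (A * σ - σ * A) O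
        + v t * conjPairing X (A * A * σ + σ * (A * A)) O
        - u t * u t * conjPairing X (A * σ * A) O
        + u t * v t * conjPairing X (A * σ * (A * A) - A * A * σ * A) O
        + v t * v t * conjPairing X (A * A * σ * (A * A)) O := by
    intro t
    have e : complexify (rot a b t) = 1 + u t • A + v t • (A * A) := complexify_rot a b t
    simp only [conjPairing, complexify_mul, e, transpose_mul, transpose_add, transpose_smul,
      hT, add_mul, mul_add, smul_mul_assoc, mul_smul_comm, trace_add, trace_smul,
      smul_eq_mul, mul_one, sub_mul, mul_sub, trace_sub, neg_mul, mul_neg, neg_neg,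
      trace_neg, smul_neg, mul_assoc]
    ring
  rw [funext hexp]
  have := (((((hasDerivAt_const (0 : ℝ) (conjPairing X σ O)).add
    (hs.mul_const (conjPairing X (A * σ - σ * A) O))).add
    (hc.mul_const (conjPairing X (A * A * σ + σ * (A * A)) O))).sub
    ((hs.mul hs).mul_const (conjPairing X (A * σ * A) O))).add
    ((hs.mul hc).mul_const (conjPairing X (A * σ * (A * A) - A * A * σ * A) O))).add
    ((hc.mul hc).mul_const (conjPairing X (A * A * σ * (A * A)) O))
  refine (this.congr_deriv ?_).congr_of_eventuallyEq (Filter.Eventually.of_forall fun t => rfl)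
  simp [u, v]

end OrthogonalGroup

section LinearAlgebra

variable {ι : Type*} [Fintype ι] [DecidableEq ι]

theorem sum_single_mul_mul_single_transpose (M : Matrix ι ι ℂ) :
    ∑ a, ∑ b, Matrix.single a b (1 : ℂ) * M * Matrix.single a b 1 = Mᵀ := by
  ext i j
  simp [Matrix.single_mul_mul_single, Matrix.sum_apply, Matrix.single_apply, ite_and]

theorem sum_single_mul_mul_single_trace (M : Matrix ι ι ℂ) :
    ∑ a, ∑ b, Matrix.single a b (1 : ℂ) * M * Matrix.single b a 1 = M.trace • 1 := by
  ext i j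
  rcases eq_or_ne i j with rfl | h
  · simp [Matrix.single_mul_mul_single, Matrix.sum_apply, Matrix.single_apply, trace]
  · have : ∀ a, ¬ (a = i ∧ a = j) := fun a ⟨h1, h2⟩ => h (h1 ▸ h2)
    simp [Matrix.single_mul_mul_single, Matrix.sum_apply, this, h]

theorem sum_rotGenC_mul_mul (M : Matrix ι ι ℂ) :
    ∑ a, ∑ b, rotGenC a b * M * rotGenC a b = (2 : ℂ) • Mᵀ - (2 * M.trace) • 1 := by
  have h1 := sum_single_mul_mul_single_transpose M
  have h2 := sum_single_mul_mul_single_trace M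
  have h3 : ∑ a, ∑ b, Matrix.single b a (1 : ℂ) * M * Matrix.single b a 1 = Mᵀ := by
    rw [Finset.sum_comm]; exact h1
  have h4 : ∑ a, ∑ b, Matrix.single b a (1 : ℂ) * M * Matrix.single a b 1 = M.trace • 1 := by
    rw [Finset.sum_comm]; exact h2
  simp only [rotGenC, sub_mul, mul_sub, Finset.sum_sub_distrib, h1, h2, h3, h4]
  module

theorem sum_commutator_commutator {ρ : Matrix ι ι ℂ} (hT : ρᵀ = ρ) (htr : ρ.trace = 1) :
    ∑ a, ∑ b, (rotGenC a b * (rotGenC a b * ρ - ρ * rotGenC a b)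
        - (rotGenC a b * ρ - ρ * rotGenC a b) * rotGenC a b)
      = (4 : ℂ) • 1 - (4 * Fintype.card ι : ℂ) • ρ := by
  have h1 := sum_rotGenC_mul_mul ρ
  have h2 := sum_rotGenC_mul_mul (1 : Matrix ι ι ℂ)
  have e : ∀ a b : ι, (rotGenC a b * (rotGenC a b * ρ - ρ * rotGenC a b)
        - (rotGenC a b * ρ - ρ * rotGenC a b) * rotGenC a b)
      = rotGenC a b * 1 * rotGenC a b * ρ + ρ * (rotGenC a b * 1 * rotGenC a b)
        - (rotGenC a b * ρ * rotGenC a b + rotGenC a b * ρ * rotGenC a b) := by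
    intro a b; noncomm_ring
  rw [Finset.sum_congr rfl fun a _ => Finset.sum_congr rfl fun b _ => e a b]
  simp only [Finset.sum_sub_distrib, Finset.sum_add_distrib, ← Finset.sum_mul,
    ← Finset.mul_sum, h1, h2, hT, htr, transpose_one, trace_one]
  simp only [sub_mul, mul_sub,
    smul_mul_assoc, mul_smul_comm, one_mul, mul_one]
  module

theorem sum_trace_mul_rotGenC {C E : Matrix ι ι ℂ} (hC : Cᵀ = -C) :
    ∑ a, ∑ b, (C * rotGenC a b).trace * (E * rotGenC a b).trace = -4 * (C * E).trace := by
  have hC' : ∀ a b, C b a = -C a b := fun a b => congrFun (congrFun hC a) b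
  have e : ∀ a b, (C * rotGenC a b).trace * (E * rotGenC a b).trace
      = -2 * (C a b * E b a) - 2 * (C b a * E a b) := by
    intro a b
    simp only [rotGenC, mul_sub, trace_sub, Matrix.trace_mul_single, hC' a b]
    simp
    ring
  have h1 : ∑ a, ∑ b, C a b * E b a = (C * E).trace := by
    simp [trace, Matrix.mul_apply]
  have h2 : ∑ a, ∑ b, C b a * E a b = (C * E).trace := by
    rw [Finset.sum_comm]; exact h1
  simp only [e, Finset.sum_sub_distrib, ← Finset.mul_sum, h1, h2]
  ring

theorem trace_mul_commutator (N A σ : Matrix ι ι ℂ) :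
    (N * (A * σ - σ * A)).trace = ((σ * N - N * σ) * A).trace := by
  simp only [mul_sub, sub_mul, trace_sub]
  rw [← mul_assoc N A σ, Matrix.trace_mul_comm (N * A) σ, mul_assoc, mul_assoc N σ A]

theorem exists_eq_conjTranspose_mul_self {M : Matrix ι ι ℂ} (hM : M.PosSemidef) :
    ∃ B : Matrix ι ι ℂ, M = Bᴴ * B := by
  open scoped MatrixOrder in
  obtain ⟨B, hB⟩ := CStarAlgebra.nonneg_iff_eq_star_mul_self.mp hM.nonneg
  exact ⟨B, hB⟩

theorem re_trace_mul_nonneg {M N : Matrix ι ι ℂ} (hM : M.PosSemidef) (hN : N.PosSemidef) :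
    0 ≤ (M * N).trace.re := by
  obtain ⟨B, rfl⟩ := exists_eq_conjTranspose_mul_self hN
  rw [← mul_assoc, trace_mul_comm, ← mul_assoc]
  exact (Complex.nonneg_iff.mp (hM.mul_mul_conjTranspose_same B).trace_nonneg).1

theorem im_trace_mul_eq_zero {M N : Matrix ι ι ℂ} (hM : M.PosSemidef) (hN : N.PosSemidef) :
    (M * N).trace.im = 0 := by
  obtain ⟨B, rfl⟩ := exists_eq_conjTranspose_mul_self hN
  rw [← mul_assoc, trace_mul_comm, ← mul_assoc]
  exact (Complex.nonneg_iff.mp (hM.mul_mul_conjTranspose_same B).trace_nonneg).2.symm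

/-- The real part of the quadratic form `z* M z`. -/
noncomputable def quadForm (M : Matrix ι ι ℂ) (z : ι → ℂ) : ℝ := (star z ⬝ᵥ (M *ᵥ z)).re

theorem quadForm_nonneg {M : Matrix ι ι ℂ} (hM : M.PosSemidef) (z : ι → ℂ) :
    0 ≤ quadForm M z := hM.re_dotProduct_nonneg z

theorem quadForm_add (M N : Matrix ι ι ℂ) (z : ι → ℂ) :
    quadForm (M + N) z = quadForm M z + quadForm N z := by
  simp [quadForm, add_mulVec]

theorem quadForm_sub (M N : Matrix ι ι ℂ) (z : ι → ℂ) :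
    quadForm (M - N) z = quadForm M z - quadForm N z := by
  simp [quadForm, sub_mulVec]

theorem quadForm_smul (c : ℝ) (M : Matrix ι ι ℂ) (z : ι → ℂ) :
    quadForm ((c : ℂ) • M) z = c * quadForm M z := by
  simp [quadForm, smul_mulVec]

theorem trace_mul_vecMulVec_star (M : Matrix ι ι ℂ) (z : ι → ℂ) :
    (M * vecMulVec z (star z)).trace = star z ⬝ᵥ (M *ᵥ z) := by
  rw [mul_vecMulVec, trace_vecMulVec, dotProduct_comm]

theorem quadForm_eq_re_trace (M : Matrix ι ι ℂ) (z : ι → ℂ) :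
    quadForm M z = (M * vecMulVec z (star z)).trace.re := by
  rw [trace_mul_vecMulVec_star, quadForm]

theorem posSemidef_vecMulVec_star (z : ι → ℂ) : (vecMulVec z (star z)).PosSemidef :=
  posSemidef_vecMulVec_self_star z

/-- A positive semidefinite matrix is bounded by its trace. -/
theorem posSemidef_trace_smul_one_sub {M : Matrix ι ι ℂ} (hM : M.PosSemidef) :
    (M.trace • 1 - M).PosSemidef := by
  obtain ⟨B, rfl⟩ := exists_eq_conjTranspose_mul_self hM
  refine posSemidef_iff_dotProduct_mulVec.mpr ⟨?_, fun x => ?_⟩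
  · rw [IsHermitian, conjTranspose_sub, conjTranspose_smul, conjTranspose_one,
      ← trace_conjTranspose]
    simp
  · have h1 : star x ⬝ᵥ ((Bᴴ * B) *ᵥ x) = ((∑ i, ‖∑ j, B i j * x j‖ ^ 2 : ℝ) : ℂ) := by
      rw [← mulVec_mulVec, dotProduct_mulVec, vecMul_conjTranspose, star_star, dotProduct]
      push_cast
      refine Finset.sum_congr rfl fun i _ => ?_
      rw [← Complex.conj_mul']
      simp [mulVec, dotProduct]
    have h2 : (Bᴴ * B).trace = ((∑ i, ∑ j, ‖B i j‖ ^ 2 : ℝ) : ℂ) := by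
      rw [Finset.sum_comm]
      push_cast
      simp [trace, Matrix.mul_apply, ← Complex.conj_mul']
    have h3 : star x ⬝ᵥ x = ((∑ j, ‖x j‖ ^ 2 : ℝ) : ℂ) := by
      push_cast
      simp [dotProduct, ← Complex.conj_mul']
    rw [sub_mulVec, dotProduct_sub, smul_mulVec, one_mulVec, dotProduct_smul, h1, h2, h3,
      smul_eq_mul, ← Complex.ofReal_mul, ← Complex.ofReal_sub, Complex.zero_le_real, sub_nonneg,
      Finset.sum_mul]
    refine Finset.sum_le_sum fun i _ => ?_
    calc ‖∑ j, B i j * x j‖ ^ 2 ≤ (∑ j, ‖B i j‖ * ‖x j‖) ^ 2 := by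
          gcongr
          exact (norm_sum_le _ _).trans_eq (by simp)
      _ ≤ _ := Finset.sum_mul_sq_le_sq_mul_sq _ _ _

theorem quadForm_mul_mul_self_le {M P : Matrix ι ι ℂ} (hM : M.PosSemidef) (htr : M.trace = 1)
    (hP : P.PosSemidef) (z : ι → ℂ) : quadForm (M * (1 - P) * M) z ≤ quadForm M z := by
  have h1 : 0 ≤ quadForm (M * P * M) z := by
    have := hP.mul_mul_conjTranspose_same M
    rw [hM.1] at this
    exact quadForm_nonneg this z
  have h2 : 0 ≤ quadForm (M - M * M) z := by
    obtain ⟨B, hB⟩ := exists_eq_conjTranspose_mul_self hM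
    have h3 : (B * Bᴴ).PosSemidef := by
      simpa using posSemidef_conjTranspose_mul_self Bᴴ
    have h4 := (posSemidef_trace_smul_one_sub h3).conjTranspose_mul_mul_same B
    rw [trace_mul_comm, ← hB, htr] at h4
    have h5 : Bᴴ * ((1 : ℂ) • 1 - B * Bᴴ) * B = M - M * M := by
      rw [hB, one_smul]; noncomm_ring
    rw [h5] at h4
    exact quadForm_nonneg h4 z
  have h6 : quadForm (M * (1 - P) * M) z = quadForm (M * M) z - quadForm (M * P * M) z := by
    rw [← quadForm_sub]; congr 1; noncomm_ring
  rw [quadForm_sub] at h2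
  linarith

theorem neg_re_trace_commutator_mul_le {ρ σ P : Matrix ι ι ℂ} {z : ι → ℂ} {c : ℝ} (hc : 0 < c)
    (hρ : ρ.PosSemidef) (hρt : ρ.trace = 1) (hσ : σ.PosSemidef) (hσt : σ.trace = 1)
    (hPH : Pᴴ = P) (hPP : P * P = P) (hPz : P *ᵥ z = z) :
    -((ρ * P - P * ρ) * (σ * vecMulVec z (star z) - vecMulVec z (star z) * σ)).trace.re
      ≤ c * quadForm σ z + quadForm ρ z / c := by
  have hP : P.PosSemidef := by
    have := posSemidef_conjTranspose_mul_self P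
    rwa [hPH, hPP] at this
  have hQ : (1 - P).PosSemidef := by
    have := posSemidef_conjTranspose_mul_self (1 - P)
    have e : (1 - P)ᴴ * (1 - P) = 1 - P := by
      rw [conjTranspose_sub, conjTranspose_one, hPH, sub_mul, mul_sub, mul_sub, hPP]
      simp
    rwa [e] at this
  set Y := vecMulVec z (star z) with hY
  have hPY : P * Y = Y := by rw [hY, mul_vecMulVec, hPz]
  have hYP : Y * P = Y := by
    have := congrArg conjTranspose hPY
    rwa [conjTranspose_mul, hPH, hY, (posSemidef_vecMulVec_star z).1] at this
  have e1 : -((ρ * P - P * ρ) * (σ * Y - Y * σ)).trace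
      = (ρ * (1 - P) * σ * Y).trace + (σ * (1 - P) * ρ * Y).trace := by
    have t1 : (P * ρ * (σ * Y)).trace = (ρ * σ * Y).trace := by
      rw [mul_assoc, trace_mul_comm, mul_assoc, mul_assoc, hYP, mul_assoc]
    have t2 : (P * ρ * (Y * σ)).trace = (σ * P * ρ * Y).trace := by
      rw [← mul_assoc, trace_mul_comm]; simp only [mul_assoc]
    have t3 : (ρ * P * (Y * σ)).trace = (σ * ρ * Y).trace := by
      rw [mul_assoc, ← mul_assoc P, hPY, ← mul_assoc, trace_mul_comm, mul_assoc]
    simp only [sub_mul, mul_sub, trace_sub, t1, t2, t3, mul_one]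
    simp only [mul_assoc]
    ring
  have h1 : 0 ≤ quadForm (((c : ℂ) • σ - ρ) * (1 - P) * ((c : ℂ) • σ - ρ)) z := by
    have h := hQ.mul_mul_conjTranspose_same ((c : ℂ) • σ - ρ)
    have e : ((c : ℂ) • σ - ρ)ᴴ = (c : ℂ) • σ - ρ := by
      rw [conjTranspose_sub, conjTranspose_smul, hσ.1, hρ.1]
      simp
    rw [e] at h
    exact quadForm_nonneg h z
  have e2 : ((c : ℂ) • σ - ρ) * (1 - P) * ((c : ℂ) • σ - ρ)
      = (c : ℂ) • ((c : ℂ) • (σ * (1 - P) * σ)) + ρ * (1 - P) * ρ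
        - (c : ℂ) • (ρ * (1 - P) * σ + σ * (1 - P) * ρ) := by
    simp only [sub_mul, mul_sub, smul_mul_assoc, mul_smul_comm]
    module
  rw [e2, quadForm_sub, quadForm_add, quadForm_smul, quadForm_smul, quadForm_smul,
    quadForm_add] at h1
  have h2 := quadForm_mul_mul_self_le hσ hσt hP z
  have h3 := quadForm_mul_mul_self_le hρ hρt hP z
  have e3 : -((ρ * P - P * ρ) * (σ * Y - Y * σ)).trace.re
      = quadForm (ρ * (1 - P) * σ) z + quadForm (σ * (1 - P) * ρ) z := by
    rw [← Complex.neg_re, e1, Complex.add_re, quadForm_eq_re_trace, quadForm_eq_re_trace]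
  rw [e3]
  have h4 : c * (quadForm (ρ * (1 - P) * σ) z + quadForm (σ * (1 - P) * ρ) z)
      ≤ c * (c * quadForm σ z + quadForm ρ z / c) := by
    have : c * (c * quadForm σ z + quadForm ρ z / c) = c * (c * quadForm σ z) + quadForm ρ z := by
      field_simp
    rw [this]
    have := mul_le_mul_of_nonneg_left (mul_le_mul_of_nonneg_left h2 hc.le) hc.le
    linarith
  exact le_of_mul_le_mul_left h4 hc

theorem quadForm_le_re_trace_mul {ρ P : Matrix ι ι ℂ} {z : ι → ℂ} (hρ : ρ.PosSemidef)
    (hPH : Pᴴ = P) (hPP : P * P = P) (hPz : P *ᵥ z = z) (hz : star z ⬝ᵥ z = 1) :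
    quadForm ρ z ≤ (P * ρ).trace.re := by
  have h1 : (P - vecMulVec z (star z)).PosSemidef := by
    have h := (posSemidef_trace_smul_one_sub
      (posSemidef_vecMulVec_star z)).conjTranspose_mul_mul_same P
    have hPY : P * vecMulVec z (star z) = vecMulVec z (star z) := by rw [mul_vecMulVec, hPz]
    have hYP : vecMulVec z (star z) * P = vecMulVec z (star z) := by
      have := congrArg conjTranspose hPY
      rwa [conjTranspose_mul, hPH, (posSemidef_vecMulVec_star z).1] at this
    rw [trace_vecMulVec, dotProduct_comm, hz, one_smul, hPH, mul_sub, sub_mul, mul_one, hPP, hPY,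
      hYP] at h
    exact h
  have h2 := re_trace_mul_nonneg h1 hρ
  rw [sub_mul, trace_sub, Complex.sub_re, trace_mul_comm (vecMulVec z (star z)),
    ← quadForm_eq_re_trace] at h2
  linarith

theorem exists_projection_extend {P : Matrix ι ι ℝ} (hT : Pᵀ = P) (hP : P * P = P) (v : ι → ℝ) :
    ∃ P' : Matrix ι ι ℝ, P'ᵀ = P' ∧ P' * P' = P' ∧ P' * P = P ∧ P' *ᵥ v = v ∧
      P'.trace ≤ P.trace + 1 := by
  set u := v - P *ᵥ v with hu
  have hPu : P *ᵥ u = 0 := by rw [hu, mulVec_sub, mulVec_mulVec, hP, sub_self]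
  have huP : u ᵥ* P = 0 := by rw [← hT, vecMul_transpose, hPu]
  by_cases h0 : u = 0
  · refine ⟨P, hT, hP, hP, ?_, by linarith⟩
    exact (sub_eq_zero.mp (hu ▸ h0)).symm
  have hd : u ⬝ᵥ u ≠ 0 := fun h => h0 (dotProduct_self_eq_zero.mp h)
  have huv : u ⬝ᵥ v = u ⬝ᵥ u := by
    conv_rhs => rw [hu, dotProduct_sub, ← hu, dotProduct_mulVec, huP, zero_dotProduct, sub_zero]
  refine ⟨P + (u ⬝ᵥ u)⁻¹ • vecMulVec u u, ?_, ?_, ?_, ?_, ?_⟩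
  · rw [transpose_add, transpose_smul, transpose_vecMulVec, hT]
  · simp only [add_mul, mul_add, hP, smul_mul_assoc, mul_smul_comm, mul_vecMulVec, hPu,
      vecMulVec_mul, huP]
    ext i j
    simp [vecMulVec_apply, vecMulVec_mulVec]
    field_simp
    simp
  · simp only [add_mul, hP, smul_mul_assoc, vecMulVec_mul, huP]
    simp
  · rw [add_mulVec, smul_mulVec, vecMulVec_mulVec, huv]
    have h1 : (u ⬝ᵥ u)⁻¹ • MulOpposite.op (u ⬝ᵥ u) • u = u := by
      rw [op_smul_eq_smul, smul_smul, inv_mul_cancel₀ hd, one_smul]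
    rw [h1, hu]
    abel
  · rw [trace_add, trace_smul, trace_vecMulVec, smul_eq_mul, inv_mul_cancel₀ hd]

theorem exists_projection {κ : Type*} [DecidableEq κ] (S : Finset κ) (y : κ → ι → ℂ) :
    ∃ P : Matrix ι ι ℝ, Pᵀ = P ∧ P * P = P ∧ (∀ i ∈ S, P.map Complex.ofReal *ᵥ y i = y i) ∧
      P.trace ≤ 2 * S.card := by
  induction S using Finset.induction_on with
  | empty => exact ⟨0, by simp, by simp, by simp, by simp⟩
  | insert a S ha ih =>
    obtain ⟨P, hT, hP, hy, htr⟩ := ih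
    obtain ⟨P₁, hT₁, hP₁, hPP₁, hv₁, htr₁⟩ := exists_projection_extend hT hP fun i => (y a i).re
    obtain ⟨P₂, hT₂, hP₂, hPP₂, hv₂, htr₂⟩ := exists_projection_extend hT₁ hP₁ fun i => (y a i).im
    refine ⟨P₂, hT₂, hP₂, fun i hi => ?_, ?_⟩
    · rcases Finset.mem_insert.mp hi with rfl | hi
      · have hre : P₂ *ᵥ (fun j => (y i j).re) = fun j => (y i j).re := by
          conv_lhs => rw [← hv₁, mulVec_mulVec, hPP₂]
          exact hv₁
        ext j
        apply Complex.ext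
        · simpa [mulVec, dotProduct] using congrFun hre j
        · simpa [mulVec, dotProduct] using congrFun hv₂ j
      · have h1 : P₂ * P = P := by rw [← hPP₁, ← mul_assoc, hPP₂]
        have h2 : P₂.map Complex.ofReal * P.map Complex.ofReal = P.map Complex.ofReal := by
          conv_rhs => rw [← h1]
          exact (Matrix.map_mul (f := Complex.ofRealHom)).symm
        rw [← hy i hi, mulVec_mulVec, h2]
    · rw [Finset.card_insert_of_notMem ha]
      push_cast
      linarith

theorem commute_vecMulVec_of_self {K : Matrix ι ι ℂ} {V : Set (ι → ℝ)}
    (hadd : ∀ u ∈ V, ∀ v ∈ V, u + v ∈ V)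
    (h : ∀ u ∈ V, Commute K (vecMulVec (fun i => (u i : ℂ)) (fun i => (u i : ℂ))))
    {u v : ι → ℝ} (hu : u ∈ V) (hv : v ∈ V) :
    Commute K (vecMulVec (fun i => (u i : ℂ)) (fun i => (v i : ℂ))) := by
  set u' : ι → ℂ := fun i => (u i : ℂ) with hu'
  set v' : ι → ℂ := fun i => (v i : ℂ) with hv'
  by_cases h0 : v = 0
  · have : v' = 0 := by ext i; simp [hv', h0]
    rw [this]
    simp
  have hd : v' ⬝ᵥ v' ≠ 0 := by
    intro hh
    apply h0
    rw [← dotProduct_self_eq_zero]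
    have : ((v ⬝ᵥ v : ℝ) : ℂ) = 0 := by
      rw [← hh]; simp [hv', dotProduct]
    exact_mod_cast this
  have h1 : Commute K (vecMulVec u' v' + vecMulVec v' u') := by
    have e : vecMulVec u' v' + vecMulVec v' u' = vecMulVec (fun i => ((u + v) i : ℂ))
        (fun i => ((u + v) i : ℂ)) - vecMulVec u' u' - vecMulVec v' v' := by
      ext i j
      simp [vecMulVec_apply, hu', hv']
      ring
    rw [e]
    exact ((h _ (hadd u hu v hv)).sub_right (h u hu)).sub_right (h v hv)
  have h2 := h1.mul_right (h v hv)
  have e2 : (vecMulVec u' v' + vecMulVec v' u') * vecMulVec v' v'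
      = (v' ⬝ᵥ v') • vecMulVec u' v' + (u' ⬝ᵥ v') • vecMulVec v' v' := by
    rw [add_mul, vecMulVec_mul_vecMulVec, vecMulVec_mul_vecMulVec]
    ext i j
    simp [vecMulVec_apply]
    try ring
  rw [e2] at h2
  have h3 := (h2.sub_right ((h v hv).smul_right (u' ⬝ᵥ v'))).smul_right (v' ⬝ᵥ v')⁻¹
  rwa [add_sub_cancel_right, smul_smul, inv_mul_cancel₀ hd, one_smul] at h3

/-- A matrix commuting with all real rank-one projections in the range of a projection `Q` acts on
that range as a scalar. -/
theorem trace_smul_mul_eq_of_commute {K : Matrix ι ι ℂ} {Q : Matrix ι ι ℝ} (hT : Qᵀ = Q)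
    (hQ : Q * Q = Q)
    (h : ∀ u : ι → ℝ, Q *ᵥ u = u →
      Commute K (vecMulVec (fun i => (u i : ℂ)) (fun i => (u i : ℂ)))) :
    (Q.map Complex.ofReal).trace • (K * Q.map Complex.ofReal)
        = (K * Q.map Complex.ofReal).trace • Q.map Complex.ofReal ∧
      (Q.map Complex.ofReal).trace • (Q.map Complex.ofReal * K)
        = (K * Q.map Complex.ofReal).trace • Q.map Complex.ofReal := by
  set R := Q.map Complex.ofReal with hR
  have hRT : ∀ i j, R i j = R j i := fun i j => by
    have := congrFun (congrFun hT i) j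
    simp only [transpose_apply] at this
    simp [hR, this]
  have hcol : ∀ a, Q *ᵥ (fun i => Q i a) = fun i => Q i a := fun a => by
    ext i
    exact congrFun (congrFun hQ i) a
  have hc : ∀ a b, Commute K (vecMulVec (fun i => R i a) (fun i => R i b)) := fun a b =>
    commute_vecMulVec_of_self (V := {u | Q *ᵥ u = u})
      (fun u hu v hv => by
        simp only [Set.mem_ofPred_eq] at hu hv ⊢
        rw [mulVec_add, hu, hv]) h (hcol a) (hcol b)
  have hent : ∀ a b i j, (K * R) i a * R j b = R i a * (R * K) b j := fun a b i j => by
    have := congrFun (congrFun (hc a b).eq i) j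
    rw [mul_vecMulVec, vecMulVec_mul, vecMulVec_apply, vecMulVec_apply] at this
    have h1 : (R * K) b j = ((fun i => R i b) ᵥ* K) j := by
      simp only [vecMul, dotProduct, Matrix.mul_apply]
      exact Finset.sum_congr rfl fun x _ => by rw [hRT]
    rw [h1]
    exact this
  constructor
  · ext i a
    have := Finset.sum_congr rfl fun b (_ : b ∈ Finset.univ) => hent a b i b
    rw [← Finset.mul_sum, ← Finset.mul_sum] at this
    rw [Matrix.smul_apply, Matrix.smul_apply, smul_eq_mul, smul_eq_mul, trace_mul_comm K R,
      trace, trace]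
    simp only [diag_apply]
    linear_combination this
  · ext b j
    have := Finset.sum_congr rfl fun a (_ : a ∈ Finset.univ) => hent a b a j
    rw [← Finset.sum_mul, ← Finset.sum_mul] at this
    rw [Matrix.smul_apply, Matrix.smul_apply, smul_eq_mul, smul_eq_mul, trace, trace, hRT b j]
    simp only [diag_apply]
    linear_combination -this

end LinearAlgebra

section ExpectedValue

variable {ι : Type*} [Fintype ι] [DecidableEq ι]

/-- The expectation `y* O σ Oᵀ y`. -/
noncomputable def expVal (y : ι → ℂ) (σ : Matrix ι ι ℂ) (O : unitaryGroup ι ℝ) : ℝ :=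
  quadForm (complexify O * σ * (complexify O)ᵀ) y

theorem posSemidef_conj {σ : Matrix ι ι ℂ} (hσ : σ.PosSemidef) (O : unitaryGroup ι ℝ) :
    (complexify O * σ * (complexify O)ᵀ).PosSemidef := by
  have := hσ.mul_mul_conjTranspose_same (complexify O)
  rwa [conjTranspose_complexify] at this

theorem trace_conj_complexify (σ : Matrix ι ι ℂ) (O : unitaryGroup ι ℝ) :
    (complexify O * σ * (complexify O)ᵀ).trace = σ.trace := by
  rw [trace_mul_comm, ← mul_assoc, complexify_transpose_mul, one_mul]

theorem expVal_nonneg {σ : Matrix ι ι ℂ} (hσ : σ.PosSemidef) (y : ι → ℂ) (O : unitaryGroup ι ℝ) :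
    0 ≤ expVal y σ O := quadForm_nonneg (posSemidef_conj hσ O) y

theorem continuous_expVal (y : ι → ℂ) (σ : Matrix ι ι ℂ) : Continuous (expVal y σ) := by
  unfold expVal quadForm
  have := continuous_complexify (ι := ι)
  fun_prop

theorem dotProduct_conj_eq_expVal {σ : Matrix ι ι ℂ} (hσ : σ.PosSemidef) (y : ι → ℂ)
    (O : unitaryGroup ι ℝ) :
    star y ⬝ᵥ ((complexify O * σ * (complexify O)ᵀ) *ᵥ y) = (expVal y σ O : ℂ) := by
  apply Complex.ext
  · rfl
  · rw [← trace_mul_vecMulVec_star, im_trace_mul_eq_zero (posSemidef_conj hσ O)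
      (posSemidef_vecMulVec_star y), Complex.ofReal_im]

theorem conjPairing_vecMulVec_star {σ : Matrix ι ι ℂ} (hσ : σ.PosSemidef) (y : ι → ℂ)
    (O : unitaryGroup ι ℝ) :
    conjPairing (vecMulVec y (star y)) σ O = (expVal y σ O : ℂ) := by
  rw [← dotProduct_conj_eq_expVal hσ, ← trace_mul_vecMulVec_star, trace_mul_comm, conjPairing]
  simp only [mul_assoc]

theorem conjPairing_eq_trace (X σ : Matrix ι ι ℂ) (O : unitaryGroup ι ℝ) :
    conjPairing X σ O = ((complexify O)ᵀ * X * complexify O * σ).trace := by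
  rw [conjPairing, trace_mul_comm]
  simp only [mul_assoc]

theorem conjPairing_sum {κ : Type*} (s : Finset κ) (X : Matrix ι ι ℂ) (σ : κ → Matrix ι ι ℂ)
    (O : unitaryGroup ι ℝ) :
    conjPairing X (∑ i ∈ s, σ i) O = ∑ i ∈ s, conjPairing X (σ i) O := by
  simp only [conjPairing_eq_trace, Finset.mul_sum, trace_sum]

theorem conjPairing_symmetrize {X : Matrix ι ι ℂ} (hX : Xᵀ = X) (σ : Matrix ι ι ℂ)
    (O : unitaryGroup ι ℝ) :
    conjPairing X ((1 / 2 : ℂ) • (σ + σᵀ)) O = conjPairing X σ O := by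
  have h : conjPairing X σᵀ O = conjPairing X σ O := by
    rw [conjPairing_eq_trace, conjPairing_eq_trace, ← trace_transpose]
    simp only [transpose_mul, transpose_transpose, hX]
    rw [trace_mul_comm]
    simp only [mul_assoc]
  have h2 : conjPairing X ((1 / 2 : ℂ) • (σ + σᵀ)) O
      = (1 / 2 : ℂ) * (conjPairing X σ O + conjPairing X σᵀ O) := by
    simp only [conjPairing_eq_trace, mul_smul_comm, mul_add, trace_smul, trace_add, smul_eq_mul]
  rw [h2, h]
  ring

theorem rot_zero (a b : ι) : rot a b 0 = 1 := Subtype.ext (rotMatrix_zero a b)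

theorem rot_add (a b : ι) (s t : ℝ) : rot a b (s + t) = rot a b s * rot a b t :=
  Subtype.ext (rotMatrix_add a b s t)

variable (μ : Measure (unitaryGroup ι ℝ)) [μ.IsHaarMeasure] [IsProbabilityMeasure μ]

theorem integral_sum_rot_eq_zero {κ : Type*} [DecidableEq κ] (S : Finset κ)
    (X : κ → Matrix ι ι ℂ) (σ : κ → Matrix ι ι ℂ) {P ρ : Matrix ι ι ℂ}
    (hPT : Pᵀ = P) (hρT : ρᵀ = ρ) (hρ : ρ.trace = 1) :
    ∫ O, ((P.trace - Fintype.card ι * conjPairing P ρ O) * ∏ i ∈ S, conjPairing (X i) (σ i) O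
      - ∑ i ∈ S, (∏ j ∈ S.erase i, conjPairing (X j) (σ j) O) *
        ((ρ * ((complexify O)ᵀ * P * complexify O) - (complexify O)ᵀ * P * complexify O * ρ) *
          (σ i * ((complexify O)ᵀ * X i * complexify O)
            - (complexify O)ᵀ * X i * complexify O * σ i)).trace) ∂μ = 0 := by
  set F' : ι → ι → unitaryGroup ι ℝ → ℂ := fun a b O =>
    conjPairing P (rotGenC a b * (rotGenC a b * ρ - ρ * rotGenC a b)
        - (rotGenC a b * ρ - ρ * rotGenC a b) * rotGenC a b) O
        * ∏ i ∈ S, conjPairing (X i) (σ i) O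
      + conjPairing P (rotGenC a b * ρ - ρ * rotGenC a b) O *
        ∑ i ∈ S, (∏ j ∈ S.erase i, conjPairing (X j) (σ j) O) •
          conjPairing (X i) (rotGenC a b * σ i - σ i * rotGenC a b) O with hF'
  have hcont : ∀ a b, Continuous (F' a b) := fun a b => by
    have := continuous_conjPairing (ι := ι)
    simp only [hF']
    fun_prop
  have hzero : ∀ a b, ∫ O, F' a b O ∂μ = 0 := fun a b => by
    refine integral_eq_zero_of_hasDerivAt_mul_right μ
      (F := fun O => conjPairing P (rotGenC a b * ρ - ρ * rotGenC a b) O *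
        ∏ i ∈ S, conjPairing (X i) (σ i) O) ?_ (hcont a b) (rot_zero a b) (rot_add a b) ?_
    · have := continuous_conjPairing (ι := ι)
      fun_prop
    · intro O
      classical
      have h := (hasDerivAt_conjPairing_rot P (rotGenC a b * ρ - ρ * rotGenC a b) a b O).mul
        (HasDerivAt.fun_finsetProd (u := S) fun i _ =>
          hasDerivAt_conjPairing_rot (X i) (σ i) a b O)
      simp only [rot_zero, mul_one] at h
      exact h
  have hsum : ∀ O, ∑ a, ∑ b, F' a b O = 4 *
      ((P.trace - Fintype.card ι * conjPairing P ρ O) * ∏ i ∈ S, conjPairing (X i) (σ i) O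
      - ∑ i ∈ S, (∏ j ∈ S.erase i, conjPairing (X j) (σ j) O) *
        ((ρ * ((complexify O)ᵀ * P * complexify O) - (complexify O)ᵀ * P * complexify O * ρ) *
          (σ i * ((complexify O)ᵀ * X i * complexify O)
            - (complexify O)ᵀ * X i * complexify O * σ i)).trace) := by
    intro O
    have h1 : ∑ a, ∑ b, conjPairing P (rotGenC a b * (rotGenC a b * ρ - ρ * rotGenC a b)
        - (rotGenC a b * ρ - ρ * rotGenC a b) * rotGenC a b) O
        = 4 * (P.trace - Fintype.card ι * conjPairing P ρ O) := by
      simp only [← conjPairing_sum]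
      rw [sum_commutator_commutator hρT hρ]
      simp only [conjPairing_eq_trace, mul_sub, mul_smul_comm, trace_sub, trace_smul, smul_eq_mul,
        mul_one]
      rw [trace_mul_comm ((complexify O)ᵀ * P), ← mul_assoc, complexify_mul_transpose, one_mul]
      ring
    have h2 : ∀ i, ∑ a, ∑ b, conjPairing P (rotGenC a b * ρ - ρ * rotGenC a b) O *
        conjPairing (X i) (rotGenC a b * σ i - σ i * rotGenC a b) O = -4 *
        ((ρ * ((complexify O)ᵀ * P * complexify O) - (complexify O)ᵀ * P * complexify O * ρ) *
          (σ i * ((complexify O)ᵀ * X i * complexify O)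
            - (complexify O)ᵀ * X i * complexify O * σ i)).trace := by
      intro i
      conv_lhs => simp only [conjPairing_eq_trace, trace_mul_commutator]
      have hC : (ρ * ((complexify O)ᵀ * P * complexify O)
          - (complexify O)ᵀ * P * complexify O * ρ)ᵀ = -(ρ * ((complexify O)ᵀ * P * complexify O)
          - (complexify O)ᵀ * P * complexify O * ρ) := by
        simp only [transpose_sub, transpose_mul, transpose_transpose, hPT, hρT, mul_assoc]
        abel
      exact sum_trace_mul_rotGenC hC
    simp only [hF', Finset.sum_add_distrib, ← Finset.sum_mul, h1]
    have h3 : ∑ a, ∑ b, conjPairing P (rotGenC a b * ρ - ρ * rotGenC a b) O *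
        ∑ i ∈ S, (∏ j ∈ S.erase i, conjPairing (X j) (σ j) O) •
          conjPairing (X i) (rotGenC a b * σ i - σ i * rotGenC a b) O
        = ∑ i ∈ S, (∏ j ∈ S.erase i, conjPairing (X j) (σ j) O) *
          ∑ a, ∑ b, conjPairing P (rotGenC a b * ρ - ρ * rotGenC a b) O *
            conjPairing (X i) (rotGenC a b * σ i - σ i * rotGenC a b) O := by
      simp only [Finset.mul_sum]
      refine ((Finset.sum_congr rfl fun a _ => Finset.sum_comm).trans Finset.sum_comm).trans ?_
      refine Finset.sum_congr rfl fun i _ => Finset.sum_congr rfl fun a _ =>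
        Finset.sum_congr rfl fun b _ => ?_
      rw [smul_eq_mul]
      ring
    rw [h3]
    simp only [h2]
    rw [mul_sub 4 (_ * _), Finset.mul_sum, eq_sub_iff_add_eq, add_assoc, ← Finset.sum_add_distrib,
      Finset.sum_eq_zero fun i _ => by ring]
    ring
  have h4 : ∫ O, ∑ a, ∑ b, F' a b O ∂μ = 0 := by
    rw [integral_finsetSum _ fun a _ => integrable_finsetSum _ fun b _ =>
      integrable_of_continuous_compactSpace μ (hcont a b)]
    refine Finset.sum_eq_zero fun a _ => ?_
    rw [integral_finsetSum _ fun b _ => integrable_of_continuous_compactSpace μ (hcont a b)]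
    exact Finset.sum_eq_zero fun b _ => hzero a b
  simp only [hsum] at h4
  rw [integral_const_mul] at h4
  exact (mul_eq_zero.mp h4).resolve_left (by norm_num)

/-- The integration by parts inequality for the expectation of `tr (P O ρ Oᵀ)` weighted by a product
of expectations in vectors fixed by the projection `P`. -/
theorem card_mul_integral_prod_expVal_mul_le {κ : Type*} [DecidableEq κ] (S : Finset κ)
    {y : κ → ι → ℂ} {σ : κ → Matrix ι ι ℂ} {P : Matrix ι ι ℝ} {ρ : Matrix ι ι ℂ} {c : ℝ}
    (hc : 0 < c) (hy : ∀ i ∈ S, star (y i) ⬝ᵥ y i = 1)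
    (hσ : ∀ i ∈ S, (σ i).PosSemidef ∧ (σ i).trace = 1)
    (hρ : ρ.PosSemidef) (hρt : ρ.trace = 1) (hPT : Pᵀ = P) (hPP : P * P = P)
    (hPy : ∀ i ∈ S, P.map Complex.ofReal *ᵥ y i = y i) :
    Fintype.card ι * ∫ O, (∏ i ∈ S, expVal (y i) (σ i) O) *
        (conjPairing (P.map Complex.ofReal) ρ O).re ∂μ
      ≤ P.trace * ∫ O, ∏ i ∈ S, expVal (y i) (σ i) O ∂μ
        + ∑ i ∈ S, (c * ∫ O, ∏ j ∈ S, expVal (y j) (σ j) O ∂μ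
          + (∫ O, (∏ j ∈ S.erase i, expVal (y j) (σ j) O) *
            (conjPairing (P.map Complex.ofReal) ρ O).re ∂μ) / c) := by
  set R : Matrix ι ι ℂ := P.map Complex.ofReal with hR
  have hRT : Rᵀ = R := by rw [hR, ← transpose_map, hPT]
  have hRH : Rᴴ = R := by
    ext i j
    have := congrFun (congrFun hPT i) j
    simp only [transpose_apply] at this
    simp [hR, this]
  have hRR : R * R = R := by
    rw [hR]
    conv_rhs => rw [← hPP]
    exact (Matrix.map_mul (f := Complex.ofRealHom)).symm
  have hRtr : R.trace = (P.trace : ℂ) := by simp [hR, trace]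
  set τ : Matrix ι ι ℂ := (1 / 2 : ℂ) • (ρ + ρᵀ) with hτ
  have hτT : τᵀ = τ := by
    rw [hτ, transpose_smul, transpose_add, transpose_transpose, add_comm]
  have hτt : τ.trace = 1 := by
    rw [hτ, trace_smul, trace_add, trace_transpose, hρt, smul_eq_mul]
    norm_num
  have hτP : τ.PosSemidef := (hρ.add hρ.transpose).smul (by simp)
  have hg : ∀ O, conjPairing R τ O = conjPairing R ρ O := conjPairing_symmetrize hRT ρ
  set g : unitaryGroup ι ℝ → ℝ := fun O => (conjPairing R ρ O).re with hgdef
  have hgc : Continuous g := Complex.continuous_re.comp (continuous_conjPairing R ρ)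
  have hfc := continuous_expVal (ι := ι)
  set T : κ → unitaryGroup ι ℝ → ℂ := fun i O =>
    ((τ * ((complexify O)ᵀ * R * complexify O) - (complexify O)ᵀ * R * complexify O * τ) *
          (σ i * ((complexify O)ᵀ * vecMulVec (y i) (star (y i)) * complexify O)
            - (complexify O)ᵀ * vecMulVec (y i) (star (y i)) * complexify O * σ i)).trace with hT
  have hTc : ∀ i, Continuous (T i) := fun i => by
    have := continuous_complexify (ι := ι)
    simp only [hT]
    fun_prop
  have hintegral := integral_sum_rot_eq_zero μ S (fun i => vecMulVec (y i) (star (y i))) σ hRT hτT hτt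
  have hbound : ∀ i ∈ S, ∀ O, -(T i O).re ≤ c * expVal (y i) (σ i) O + g O / c := by
    intro i hi O
    set U := complexify O with hU
    have hUH : Uᴴ = Uᵀ := conjTranspose_complexify O
    have hUU : U * Uᵀ = 1 := complexify_mul_transpose O
    have hz : star (Uᵀ *ᵥ y i) = star (y i) ᵥ* U := by
      rw [star_mulVec, ← hUH, conjTranspose_conjTranspose]
    have hY : Uᵀ * vecMulVec (y i) (star (y i)) * U
        = vecMulVec (Uᵀ *ᵥ y i) (star (Uᵀ *ᵥ y i)) := by
      rw [mul_vecMulVec, vecMulVec_mul, hz]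
    have hNH : (Uᵀ * R * U)ᴴ = Uᵀ * R * U := by
      rw [conjTranspose_mul, conjTranspose_mul, hRH, ← hUH, conjTranspose_conjTranspose, mul_assoc]
    have hNN : Uᵀ * R * U * (Uᵀ * R * U) = Uᵀ * R * U := by
      calc Uᵀ * R * U * (Uᵀ * R * U) = Uᵀ * R * (U * Uᵀ) * R * U := by simp only [mul_assoc]
        _ = Uᵀ * (R * R) * U := by rw [hUU, mul_one]; simp only [mul_assoc]
        _ = Uᵀ * R * U := by rw [hRR]
    have hNz : (Uᵀ * R * U) *ᵥ (Uᵀ *ᵥ y i) = Uᵀ *ᵥ y i := by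
      rw [mulVec_mulVec, mul_assoc, hUU, mul_one, ← mulVec_mulVec, hPy i hi]
    have hzz : star (Uᵀ *ᵥ y i) ⬝ᵥ (Uᵀ *ᵥ y i) = 1 := by
      rw [hz, dotProduct_mulVec, vecMul_vecMul, hUU, vecMul_one, hy i hi]
    have hq : quadForm (σ i) (Uᵀ *ᵥ y i) = expVal (y i) (σ i) O := by
      rw [quadForm_eq_re_trace, expVal, quadForm_eq_re_trace, ← hY, ← mul_assoc, trace_mul_comm]
      simp only [mul_assoc, ← hU]
    have h1 := neg_re_trace_commutator_mul_le hc hτP hτt (hσ i hi).1 (hσ i hi).2 hNH hNN hNz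
    have h2 := quadForm_le_re_trace_mul hτP hNH hNN hNz hzz
    rw [← conjPairing_eq_trace, hg] at h2
    rw [hq, ← hY] at h1
    refine h1.trans ?_
    gcongr
  have hreal : ∀ O, ((R.trace - Fintype.card ι * conjPairing R τ O)
        * ∏ i ∈ S, conjPairing (vecMulVec (y i) (star (y i))) (σ i) O
      - ∑ i ∈ S, (∏ j ∈ S.erase i, conjPairing (vecMulVec (y j) (star (y j))) (σ j) O) *
        T i O).re = (P.trace - Fintype.card ι * g O) * ∏ i ∈ S, expVal (y i) (σ i) O
        + ∑ i ∈ S, (∏ j ∈ S.erase i, expVal (y j) (σ j) O) * -(T i O).re := by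
    intro O
    have hF : ∀ A ⊆ S, ∏ i ∈ A, conjPairing (vecMulVec (y i) (star (y i))) (σ i) O
        = ((∏ i ∈ A, expVal (y i) (σ i) O : ℝ) : ℂ) := fun A hA => by
      rw [Complex.ofReal_prod]
      exact Finset.prod_congr rfl fun i hi => conjPairing_vecMulVec_star (hσ i (hA hi)).1 _ _
    rw [hF S subset_rfl, Complex.sub_re, Complex.re_sum, hRtr, hg]
    simp only [Complex.re_mul_ofReal, sub_eq_add_neg, ← Finset.sum_neg_distrib]
    congr 1
    · simp [hgdef]
    · refine Finset.sum_congr rfl fun i hi => ?_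
      rw [hF _ (Finset.erase_subset _ _), Complex.re_ofReal_mul, mul_neg]
  have hI : ∀ {f : unitaryGroup ι ℝ → ℝ}, Continuous f → Integrable f μ := fun hf =>
    hf.integrable_of_hasCompactSupport (HasCompactSupport.of_compactSpace _)
  have hre := congrArg Complex.re hintegral
  rw [← Complex.reCLM_apply, ← Complex.reCLM.integral_comp_comm] at hre
  swap
  · refine integrable_of_continuous_compactSpace μ ?_
    have h1 := continuous_conjPairing (ι := ι)
    have h2 := continuous_complexify (ι := ι)
    fun_prop
  simp only [Complex.reCLM_apply] at hre
  rw [integral_congr_ae (Filter.Eventually.of_forall hreal), integral_add (hI (by fun_prop))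
    (hI (by fun_prop)), integral_finsetSum _ fun i _ => hI (by fun_prop)] at hre
  have h1 : ∫ O, (P.trace - Fintype.card ι * g O) * ∏ i ∈ S, expVal (y i) (σ i) O ∂μ
      = P.trace * ∫ O, ∏ i ∈ S, expVal (y i) (σ i) O ∂μ
        - Fintype.card ι * ∫ O, (∏ i ∈ S, expVal (y i) (σ i) O) * g O ∂μ := by
    rw [← integral_const_mul, ← integral_const_mul, ← integral_sub (hI (by fun_prop))
      (hI (by fun_prop))]
    exact integral_congr_ae (Filter.Eventually.of_forall fun O => by ring)
  have h2 : ∑ i ∈ S, ∫ O, (∏ j ∈ S.erase i, expVal (y j) (σ j) O) * -(T i O).re ∂μ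
      ≤ ∑ i ∈ S, (c * ∫ O, ∏ j ∈ S, expVal (y j) (σ j) O ∂μ
          + (∫ O, (∏ j ∈ S.erase i, expVal (y j) (σ j) O) * g O ∂μ) / c) := by
    refine Finset.sum_le_sum fun i hi => ?_
    rw [← integral_const_mul, ← integral_div, ← integral_add (hI (by fun_prop)) (hI (by fun_prop))]
    refine integral_mono (hI (by fun_prop)) (hI (by fun_prop)) fun O => ?_
    calc (∏ j ∈ S.erase i, expVal (y j) (σ j) O) * -(T i O).re
        ≤ (∏ j ∈ S.erase i, expVal (y j) (σ j) O) * (c * expVal (y i) (σ i) O + g O / c) :=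
          mul_le_mul_of_nonneg_left (hbound i hi O) (Finset.prod_nonneg fun j hj =>
            expVal_nonneg (hσ j (Finset.mem_of_mem_erase hj)).1 _ _)
      _ = _ := by
          rw [← Finset.mul_prod_erase S _ hi]
          ring
  rw [h1, Complex.zero_re] at hre
  linarith

end ExpectedValue

section Commutant

variable {ι : Type*} [Fintype ι] [DecidableEq ι]

theorem sum_mul_quadForm_eq_re_trace {τ : Type*} [Fintype τ] {lam : τ → ℝ} {y : τ → ι → ℂ}
    (h : ∑ t, (lam t : ℂ) • vecMulVec (y t) (star (y t)) = 1) (N : Matrix ι ι ℂ) :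
    ∑ t, lam t * quadForm N (y t) = N.trace.re := by
  conv_rhs => rw [← mul_one N, ← h, Finset.mul_sum, trace_sum, Complex.re_sum]
  refine Finset.sum_congr rfl fun t _ => ?_
  rw [mul_smul_comm, trace_smul, smul_eq_mul, Complex.re_ofReal_mul, quadForm_eq_re_trace]

/-- The reflection in the hyperplane orthogonal to `u`. -/
noncomputable def reflection (u : ι → ℝ) : Matrix ι ι ℝ := 1 - (2 * (u ⬝ᵥ u)⁻¹) • vecMulVec u u

theorem reflection_transpose (u : ι → ℝ) : (reflection u)ᵀ = reflection u := by
  simp [reflection, transpose_vecMulVec]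

theorem reflection_mul_self (u : ι → ℝ) : reflection u * reflection u = 1 := by
  have h : vecMulVec u u * vecMulVec u u = (u ⬝ᵥ u) • vecMulVec u u := by
    rw [vecMulVec_mul_vecMulVec]
    ext i j
    simp [vecMulVec_apply]
    ring
  have h2 : (2 * (u ⬝ᵥ u)⁻¹) * ((2 * (u ⬝ᵥ u)⁻¹) * (u ⬝ᵥ u)) = 2 * (2 * (u ⬝ᵥ u)⁻¹) := by
    by_cases h0 : u ⬝ᵥ u = 0
    · simp [h0]
    · field_simp
  simp only [reflection, sub_mul, mul_sub, smul_mul_assoc, mul_smul_comm, h, one_mul, mul_one,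
    smul_smul]
  rw [smul_sub, smul_smul, h2]
  module

/-- The reflection in the hyperplane orthogonal to `u`, as an orthogonal matrix. -/
noncomputable def reflectionUnitary (u : ι → ℝ) : unitaryGroup ι ℝ :=
  ⟨reflection u, by
    rw [mem_unitaryGroup_iff, star_eq_conjTranspose, conjTranspose_eq_transpose_of_trivial,
      reflection_transpose, reflection_mul_self]⟩

theorem complexify_reflectionUnitary (u : ι → ℝ) : complexify (reflectionUnitary u)
    = 1 - ((2 * (u ⬝ᵥ u)⁻¹ : ℝ) : ℂ) • vecMulVec (fun i => (u i : ℂ)) (fun i => (u i : ℂ)) := by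
  ext i j
  simp only [complexify, reflectionUnitary, reflection, Matrix.map_apply, Matrix.sub_apply,
    Matrix.smul_apply, vecMulVec_apply, Matrix.one_apply, smul_eq_mul, Complex.ofReal_sub,
    Complex.ofReal_mul]
  split_ifs <;> simp

theorem complexify_reflectionUnitary_mulVec {P : Matrix ι ι ℝ} (hPT : Pᵀ = P) {u : ι → ℝ}
    (hu : P *ᵥ u = 0) {y : ι → ℂ} (hy : P.map Complex.ofReal *ᵥ y = y) :
    (complexify (reflectionUnitary u))ᵀ *ᵥ y = y := by
  have h : (fun i => (u i : ℂ)) ⬝ᵥ y = 0 := by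
    rw [← hy, dotProduct_mulVec]
    have : (fun i => (u i : ℂ)) ᵥ* P.map Complex.ofReal = 0 := by
      rw [← hPT, transpose_map, vecMul_transpose]
      ext i
      have := congrFun hu i
      simpa [mulVec, dotProduct] using congrArg Complex.ofReal this
    rw [this, zero_dotProduct]
  rw [complexify_reflectionUnitary, transpose_sub, transpose_smul, transpose_vecMulVec,
    transpose_one, sub_mulVec, smul_mulVec, vecMulVec_mulVec, h]
  simp

theorem expVal_mul_left (y : ι → ℂ) (σ : Matrix ι ι ℂ) (h O : unitaryGroup ι ℝ)
    (hy : (complexify h)ᵀ *ᵥ y = y) : expVal y σ (h * O) = expVal y σ O := by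
  have hs : star y ᵥ* complexify h = star y := by
    conv_rhs => rw [← hy, star_mulVec, ← conjTranspose_complexify, conjTranspose_conjTranspose]
  unfold expVal quadForm
  rw [complexify_mul, transpose_mul]
  have : complexify h * complexify O * σ * ((complexify O)ᵀ * (complexify h)ᵀ)
      = complexify h * (complexify O * σ * (complexify O)ᵀ) * (complexify h)ᵀ := by
    simp only [mul_assoc]
  rw [this, ← mulVec_mulVec, hy, ← mulVec_mulVec, dotProduct_mulVec, hs]

variable (μ : Measure (unitaryGroup ι ℝ)) [μ.IsHaarMeasure] [IsProbabilityMeasure μ]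

/-- The average of `O σ Oᵀ` weighted by `W`. -/
noncomputable def conjAverage (W : unitaryGroup ι ℝ → ℝ) (σ : Matrix ι ι ℂ) : Matrix ι ι ℂ :=
  Matrix.of fun i j => ∫ O, (W O : ℂ) * (complexify O * σ * (complexify O)ᵀ) i j ∂μ

theorem trace_mul_conjAverage {W : unitaryGroup ι ℝ → ℝ} (hW : Continuous W) (σ X : Matrix ι ι ℂ) :
    (X * conjAverage μ W σ).trace = ∫ O, (W O : ℂ) * conjPairing X σ O ∂μ := by
  have hU := continuous_complexify (ι := ι)
  have hc : ∀ i j, Continuous fun O => (W O : ℂ) * (complexify O * σ * (complexify O)ᵀ) i j :=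
    fun i j => by fun_prop
  have h1 : ∀ O, (W O : ℂ) * conjPairing X σ O
      = ∑ i, ∑ j, X i j * ((W O : ℂ) * (complexify O * σ * (complexify O)ᵀ) j i) := by
    intro O
    have : conjPairing X σ O = (X * (complexify O * σ * (complexify O)ᵀ)).trace := by
      simp only [conjPairing, mul_assoc]
    rw [this, trace, Finset.mul_sum]
    refine Finset.sum_congr rfl fun i _ => ?_
    rw [diag_apply, Matrix.mul_apply, Finset.mul_sum]
    exact Finset.sum_congr rfl fun j _ => by ring
  simp only [h1]
  have hI : ∀ i j, Integrable
      (fun O => X i j * ((W O : ℂ) * (complexify O * σ * (complexify O)ᵀ) j i)) μ := fun i j =>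
    (integrable_of_continuous_compactSpace μ (hc j i)).const_mul _
  rw [integral_finsetSum _ fun i _ => integrable_finsetSum _ fun j _ => hI i j]
  refine Finset.sum_congr rfl fun i _ => ?_
  rw [integral_finsetSum _ fun j _ => hI i j, diag_apply, Matrix.mul_apply]
  refine Finset.sum_congr rfl fun j _ => ?_
  rw [integral_const_mul, conjAverage, of_apply]

theorem commute_conjAverage {W : unitaryGroup ι ℝ → ℝ} (hW : Continuous W) (σ : Matrix ι ι ℂ)
    {u : ι → ℝ} (h : ∀ O, W (reflectionUnitary u * O) = W O) :
    Commute (conjAverage μ W σ) (vecMulVec (fun i => (u i : ℂ)) (fun i => (u i : ℂ))) := by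
  by_cases h0 : u = 0
  · have : (fun i => (u i : ℂ)) = 0 := by ext i; simp [h0]
    rw [this]
    simp
  have hd : u ⬝ᵥ u ≠ 0 := fun hh => h0 (dotProduct_self_eq_zero.mp hh)
  set K := conjAverage μ W σ with hK
  set H := complexify (reflectionUnitary u) with hH
  have h1 : H * K * Hᵀ = K := by
    refine Matrix.ext_iff_trace_mul_left.mpr fun X => ?_
    have e : (X * (H * K * Hᵀ)).trace = (Hᵀ * X * H * K).trace := by
      rw [← mul_assoc, trace_mul_comm]
      simp only [mul_assoc]
    rw [e, hK, trace_mul_conjAverage μ hW, trace_mul_conjAverage μ hW]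
    have e2 : ∀ O, (W O : ℂ) * conjPairing (Hᵀ * X * H) σ O
        = (fun O => (W O : ℂ) * conjPairing X σ O) (reflectionUnitary u * O) := by
      intro O
      simp only [h, conjPairing_eq_trace, complexify_mul, transpose_mul, ← hH, mul_assoc]
    simp only [e2]
    exact integral_mul_left_eq_self (fun O => (W O : ℂ) * conjPairing X σ O) _
  have h2 : Commute K H := by
    have : H * K = K * H := by
      calc H * K = H * K * (Hᵀ * H) := by rw [hH, complexify_transpose_mul, mul_one]
        _ = H * K * Hᵀ * H := by simp only [mul_assoc]
        _ = K * H := by rw [h1]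
    exact this.symm
  have h3 : vecMulVec (fun i => (u i : ℂ)) (fun i => (u i : ℂ))
      = ((2 * (u ⬝ᵥ u)⁻¹ : ℝ) : ℂ)⁻¹ • (1 - H) := by
    rw [hH, complexify_reflectionUnitary, sub_sub_cancel, smul_smul, inv_mul_cancel₀, one_smul]
    simp only [ne_eq, Complex.ofReal_eq_zero]
    positivity
  rw [h3]
  exact ((Commute.one_right K).sub_right h2).smul_right _

/-- If the weight is invariant under reflections orthogonal to the range of the projection `P`, then
the weighted average of an expectation differs little from that of `1 / D`, summed over a POVM. -/
theorem sum_abs_integral_mul_expVal_sub_le {W : unitaryGroup ι ℝ → ℝ} (hW : Continuous W)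
    (hW0 : ∀ O, 0 ≤ W O) {P : Matrix ι ι ℝ} (hPT : Pᵀ = P) (hPP : P * P = P)
    (hinv : ∀ u : ι → ℝ, P *ᵥ u = 0 → ∀ O, W (reflectionUnitary u * O) = W O)
    (hd : 2 * P.trace ≤ Fintype.card ι) [Nonempty ι] {σ : Matrix ι ι ℂ} (hσ : σ.PosSemidef)
    (hσt : σ.trace = 1) {τ : Type*} [Fintype τ] {lam : τ → ℝ} (hlam : ∀ t, 0 ≤ lam t)
    {y : τ → ι → ℂ} (hy : ∀ t, star (y t) ⬝ᵥ y t = 1)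
    (h : ∑ t, (lam t : ℂ) • vecMulVec (y t) (star (y t)) = 1) :
    ∑ t, lam t * |∫ O, W O * expVal (y t) σ O ∂μ - (∫ O, W O ∂μ) / Fintype.card ι|
      ≤ 2 * ∫ O, W O * (conjPairing (P.map Complex.ofReal) σ O).re ∂μ
        + 4 * P.trace * (∫ O, W O ∂μ) / Fintype.card ι := by
  set K := conjAverage μ W σ with hK
  set R : Matrix ι ι ℂ := P.map Complex.ofReal with hR
  set w := ∫ O, W O ∂μ with hw
  set D : ℝ := (Fintype.card ι : ℝ) with hD
  set d := P.trace with hdd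
  have hD0 : 0 < D := by rw [hD]; exact_mod_cast Fintype.card_pos
  have hRH : Rᴴ = R := by
    ext i j
    have := congrFun (congrFun hPT i) j
    simp only [transpose_apply] at this
    simp [hR, this]
  have hRR : R * R = R := by
    rw [hR]
    conv_rhs => rw [← hPP]
    exact (Matrix.map_mul (f := Complex.ofRealHom)).symm
  have hRtr : R.trace = (d : ℂ) := by simp [hR, hdd, trace]
  have hRpos : R.PosSemidef := by
    have := posSemidef_conjTranspose_mul_self R
    rwa [hRH, hRR] at this
  have hd0 : 0 ≤ d := by
    have := (Complex.nonneg_iff.mp hRpos.trace_nonneg).1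
    rwa [hRtr, Complex.ofReal_re] at this
  set β := ∫ O, W O * (conjPairing R σ O).re ∂μ with hβ
  have hreal : ∀ {X : Matrix ι ι ℂ}, X.PosSemidef →
      (X * K).trace = ((∫ O, W O * (conjPairing X σ O).re ∂μ : ℝ) : ℂ) := by
    intro X hX
    rw [hK, trace_mul_conjAverage μ hW, ← integral_complex_ofReal]
    refine integral_congr_ae (Filter.Eventually.of_forall fun O => ?_)
    have him : (conjPairing X σ O).im = 0 := by
      have := im_trace_mul_eq_zero hX (posSemidef_conj hσ O)
      rw [conjPairing]
      simpa only [mul_assoc] using this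
    apply Complex.ext <;> simp [him]
  have hRK : (R * K).trace = (β : ℂ) := hreal hRpos
  have hKtr : K.trace = (w : ℂ) := by
    have := hreal PosSemidef.one
    rw [one_mul] at this
    rw [this, hw]
    congr 2
    ext O
    rw [conjPairing, one_mul, trace_conj_complexify, hσt, Complex.one_re, mul_one]
  have hquad : ∀ v, quadForm K v = ∫ O, W O * expVal v σ O ∂μ := by
    intro v
    rw [quadForm_eq_re_trace, trace_mul_comm, hreal (posSemidef_vecMulVec_star v),
      Complex.ofReal_re]
    refine integral_congr_ae (Filter.Eventually.of_forall fun O => ?_)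
    simp only [conjPairing_vecMulVec_star hσ, Complex.ofReal_re]
  have hKpos : ∀ v, 0 ≤ quadForm K v := fun v => by
    rw [hquad]
    exact integral_nonneg fun O => mul_nonneg (hW0 O) (expVal_nonneg hσ v O)
  have hQmap : (1 - P).map Complex.ofReal = 1 - R := by
    ext i j
    simp only [hR, Matrix.map_apply, Matrix.sub_apply, Matrix.one_apply, Complex.ofReal_sub]
    split_ifs <;> simp
  have hcomm := trace_smul_mul_eq_of_commute (K := K) (Q := 1 - P)
    (by rw [transpose_sub, transpose_one, hPT]) (by simp [sub_mul, mul_sub, hPP])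
    fun u hu => commute_conjAverage μ hW σ (hinv u (by
      rw [← hu, mulVec_mulVec, mul_sub, mul_one, hPP, sub_self, zero_mulVec]))
  rw [hQmap] at hcomm
  have hQtr : (1 - R).trace = ((D - d : ℝ) : ℂ) := by
    rw [trace_sub, trace_one, hRtr, hD]; simp
  have hKQtr : (K * (1 - R)).trace = ((w - β : ℝ) : ℂ) := by
    rw [mul_sub, mul_one, trace_sub, trace_mul_comm K R, hRK, hKtr]; simp
  have hDd : 0 < D - d := by linarith
  set a := (w - β) / (D - d) with ha
  have hDdC : ((D - d : ℝ) : ℂ) ≠ 0 := Complex.ofReal_ne_zero.mpr hDd.ne'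
  have haC : (a : ℂ) = ((D - d : ℝ) : ℂ)⁻¹ * ((w - β : ℝ) : ℂ) := by
    rw [ha, Complex.ofReal_div, div_eq_inv_mul]
  rw [hQtr, hKQtr] at hcomm
  have hKQ : K * (1 - R) = (a : ℂ) • (1 - R) := by
    rw [haC, ← smul_smul, ← hcomm.1, smul_smul, inv_mul_cancel₀ hDdC, one_smul]
  have hQK : (1 - R) * K = (a : ℂ) • (1 - R) := by
    rw [haC, ← smul_smul, ← hcomm.2, smul_smul, inv_mul_cancel₀ hDdC, one_smul]
  have hdec : K = R * K * R + (a : ℂ) • 1 - (a : ℂ) • R := by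
    have h1 : K = R * K * R + R * (K * (1 - R)) + (1 - R) * K := by noncomm_ring
    rw [hKQ, hQK] at h1
    have h2 : R * ((a : ℂ) • (1 - R)) = 0 := by
      rw [mul_smul_comm, mul_sub, mul_one, hRR, sub_self, smul_zero]
    rw [h2, smul_sub] at h1
    rw [add_sub_assoc]
    conv_lhs => rw [h1, add_zero]
  have hgc := continuous_conjPairing (ι := ι)
  have hI : ∀ {f : unitaryGroup ι ℝ → ℝ}, Continuous f → Integrable f μ := fun hf =>
    hf.integrable_of_hasCompactSupport (HasCompactSupport.of_compactSpace _)
  have hpair : ∀ {X : Matrix ι ι ℂ}, X.PosSemidef → ∀ O, 0 ≤ (conjPairing X σ O).re := by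
    intro X hX O
    have := re_trace_mul_nonneg hX (posSemidef_conj hσ O)
    rw [conjPairing]
    simpa only [mul_assoc] using this
  have hQpos : (1 - R).PosSemidef := by
    have := posSemidef_conjTranspose_mul_self (1 - R)
    rw [conjTranspose_sub, conjTranspose_one, hRH, sub_mul, mul_sub, mul_sub, hRR] at this
    simpa using this
  have hβw : β ≤ w := by
    refine integral_mono (hI (by fun_prop)) (hI hW) fun O => ?_
    have h1 := hpair hQpos O
    have h2 : (conjPairing (1 - R) σ O).re = 1 - (conjPairing R σ O).re := by
      rw [conjPairing, sub_mul, sub_mul, sub_mul, one_mul, trace_sub, trace_conj_complexify, hσt,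
        Complex.sub_re, Complex.one_re, conjPairing]
    exact mul_le_of_le_one_right (hW0 O) (by linarith)
  have hβ0 : 0 ≤ β := integral_nonneg fun O => mul_nonneg (hW0 O) (hpair hRpos O)
  have ha0 : 0 ≤ a := div_nonneg (by linarith) hDd.le
  have hwD : w / D - a = (β - a * d) / D := by
    have : a * (D - d) = w - β := div_mul_cancel₀ _ hDd.ne'
    field_simp
    linarith
  set N : Matrix ι ι ℂ := R * K * R + (a : ℂ) • R + (((β + a * d) / D : ℝ) : ℂ) • 1 with hN
  have hquad1 : ∀ t, quadForm (1 : Matrix ι ι ℂ) (y t) = 1 := fun t => by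
    rw [quadForm, one_mulVec, hy, Complex.one_re]
  have hbound : ∀ t, |∫ O, W O * expVal (y t) σ O ∂μ - w / D| ≤ quadForm N (y t) := by
    intro t
    have h1 := congrArg (fun M => quadForm M (y t)) hdec
    simp only [quadForm_sub, quadForm_add, quadForm_smul, hquad1] at h1
    have h2 : quadForm N (y t) = quadForm (R * K * R) (y t) + a * quadForm R (y t)
        + (β + a * d) / D := by
      rw [hN, quadForm_add, quadForm_add, quadForm_smul, quadForm_smul, hquad1, mul_one]
    have h3 : 0 ≤ quadForm (R * K * R) (y t) := by
      have h := hKpos (R *ᵥ y t)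
      rwa [quadForm, star_mulVec, hRH, ← dotProduct_mulVec, mulVec_mulVec, mulVec_mulVec] at h
    have h4 : 0 ≤ a * quadForm R (y t) := mul_nonneg ha0 (quadForm_nonneg hRpos _)
    have h5 : 0 ≤ β / D := div_nonneg hβ0 hD0.le
    have h6 : 0 ≤ a * d / D := div_nonneg (mul_nonneg ha0 hd0) hD0.le
    rw [← hquad, h1, h2, abs_le]
    rw [sub_div] at hwD
    rw [add_div]
    constructor <;> linarith
  have had : a * d ≤ 2 * d * w / D := by
    have : a ≤ 2 * w / D := by
      rw [ha, div_le_div_iff₀ hDd hD0]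
      nlinarith
    calc a * d ≤ 2 * w / D * d := by gcongr
      _ = _ := by ring
  have hNtr : N.trace.re = 2 * β + 2 * (a * d) := by
    have h1 : (R * K * R).trace = (β : ℂ) := by
      rw [trace_mul_comm, ← mul_assoc, hRR, hRK]
    rw [hN, trace_add, trace_add, h1, trace_smul, trace_smul, hRtr, trace_one]
    simp only [smul_eq_mul, Complex.add_re, Complex.ofReal_re, Complex.re_ofReal_mul,
      Complex.natCast_re, ← hD]
    field_simp
    ring
  calc _ ≤ ∑ t, lam t * quadForm N (y t) :=
        Finset.sum_le_sum fun t _ => mul_le_mul_of_nonneg_left (hbound t) (hlam t)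
    _ = 2 * β + 2 * (a * d) := by rw [sum_mul_quadForm_eq_re_trace h, hNtr]
    _ ≤ 2 * β + 2 * (2 * d * w / D) := by gcongr
    _ = _ := by ring

end Commutant

section Marginalization

variable {n : ℕ} {T : Type*} [Fintype T] [Nonempty T]

theorem sum_eq_inv_mul_sum_update (i : Fin n) (F : (Fin n → T) → ℝ) :
    ∑ s, F s = (Fintype.card T : ℝ)⁻¹ * ∑ s, ∑ t, F (Function.update s i t) := by
  have h : ∀ g : (Fin n → T) → ℝ, ∑ s, g s
      = ∑ t : T, ∑ r : ({j // j ≠ i} → T), g ((Equiv.piSplitAt i fun _ => T).symm (t, r)) := by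
    intro g
    rw [← Fintype.sum_prod_type', ← Equiv.sum_comp (Equiv.piSplitAt i fun _ => T).symm]
  have hu : ∀ (t t' : T) (r : {j // j ≠ i} → T),
      Function.update ((Equiv.piSplitAt i fun _ => T).symm (t', r)) i t
        = (Equiv.piSplitAt i fun _ => T).symm (t, r) := by
    intro t t' r
    ext j
    by_cases hj : j = i
    · subst hj; simp [Equiv.piSplitAt]
    · simp [Equiv.piSplitAt, hj]
  rw [h, h fun s => ∑ t, F (Function.update s i t)]
  simp only [hu]
  rw [Finset.sum_const, Finset.card_univ, nsmul_eq_mul, ← mul_assoc, inv_mul_cancel₀ (by simp),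
    one_mul, Finset.sum_comm]

theorem DependsOn.apply_update {α β : Type*} {f : (Fin n → α) → β} {i : Fin n}
    (hf : DependsOn f (Set.Iio i)) (s : Fin n → α) (t : α) : f (Function.update s i t) = f s :=
  hf fun _ hj => Function.update_of_ne (ne_of_lt hj) _ _

theorem sum_mul_prod_eq_of_dependsOn {p : Fin n → (Fin n → T) → ℝ}
    (hp : ∀ l, DependsOn (p l) (Set.Iic l)) (hsum : ∀ l s, ∑ t, p l (Function.update s l t) = 1)
    {H : (Fin n → T) → ℝ} (A : Finset (Fin n)) (hH : ∀ a ∈ A, DependsOn H (Set.Iio a)) :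
    ∑ s, H s * ∏ l ∈ A, p l s = (Fintype.card T : ℝ)⁻¹ ^ A.card * ∑ s, H s := by
  induction A using Finset.induction_on_max with
  | empty => simp
  | insert a A ha ih =>
    have ha' : a ∉ A := fun h => lt_irrefl _ (ha a h)
    rw [sum_eq_inv_mul_sum_update a, Finset.card_insert_of_notMem ha', pow_succ', mul_assoc,
      ← ih fun b hb => hH b (Finset.mem_insert_of_mem hb)]
    congr 1
    refine Finset.sum_congr rfl fun s _ => ?_
    have h1 : ∀ t, H (Function.update s a t) * ∏ l ∈ insert a A, p l (Function.update s a t)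
        = (H s * ∏ l ∈ A, p l s) * p a (Function.update s a t) := by
      intro t
      rw [Finset.prod_insert ha', (hH a (Finset.mem_insert_self a A)).apply_update,
        Finset.prod_congr rfl fun l hl =>
          ((hp l).mono (Set.Iic_subset_Iio.mpr (ha l hl))).apply_update s t]
      ring
    simp only [h1, ← Finset.mul_sum, hsum, mul_one]

theorem sum_prod_eq_one {p : Fin n → (Fin n → T) → ℝ}
    (hp : ∀ l, DependsOn (p l) (Set.Iic l)) (hsum : ∀ l s, ∑ t, p l (Function.update s l t) = 1) :
    ∑ s, ∏ l, p l s = 1 := by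
  have := sum_mul_prod_eq_of_dependsOn hp hsum (H := fun _ => 1) Finset.univ
    fun a _ => dependsOn_const 1 |>.mono (Set.empty_subset _)
  simp only [one_mul] at this
  rw [this]
  simp

theorem sum_prod_mul_le_sum_prod_mul {p : Fin n → (Fin n → T) → ℝ} (hp0 : ∀ l s, 0 ≤ p l s)
    (hp : ∀ l, DependsOn (p l) (Set.Iic l)) (hsum : ∀ l s, ∑ t, p l (Function.update s l t) = 1)
    {i : Fin n} {u v : (Fin n → T) → ℝ}
    (hu : DependsOn u (Set.Iic i)) (hv : DependsOn v (Set.Iic i))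
    (huv : ∀ s, ∑ t, p i (Function.update s i t) * u (Function.update s i t)
      ≤ ∑ t, p i (Function.update s i t) * v (Function.update s i t)) :
    ∑ s, (∏ l, p l s) * u s ≤ ∑ s, (∏ l, p l s) * v s := by
  set G : (Fin n → T) → ℝ := fun s => ∏ l ∈ Finset.Iio i, p l s with hGdef
  have hG : DependsOn G (Set.Iio i) := fun s s' h => Finset.prod_congr rfl fun l hl =>
    hp l fun j hj => h j (lt_of_le_of_lt hj (Finset.mem_Iio.mp hl))
  have hsplit : ∀ (w : (Fin n → T) → ℝ) s,
      (∏ l, p l s) * w s = (G s * (p i s * w s)) * ∏ l ∈ Finset.Ioi i, p l s := by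
    intro w s
    have hU : (Finset.univ : Finset (Fin n)) = insert i (Finset.Iio i ∪ Finset.Ioi i) := by
      ext j
      have := lt_trichotomy j i
      simp only [Finset.mem_univ, Finset.mem_insert, Finset.mem_union, Finset.mem_Iio,
        Finset.mem_Ioi, true_iff]
      tauto
    have hd : Disjoint (Finset.Iio i) (Finset.Ioi i) :=
      Finset.disjoint_left.mpr fun j h1 h2 =>
        lt_asymm (Finset.mem_Iio.mp h1) (Finset.mem_Ioi.mp h2)
    rw [hU, Finset.prod_insert (by simp), Finset.prod_union hd]
    ring
  have hdep : ∀ {w : (Fin n → T) → ℝ}, DependsOn w (Set.Iic i) → ∀ a ∈ Finset.Ioi i,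
      DependsOn (fun s => G s * (p i s * w s)) (Set.Iio a) := by
    intro w hw a ha s s' h
    have hia := Finset.mem_Ioi.mp ha
    have hle : ∀ j ∈ Set.Iic i, s j = s' j := fun j hj => h j (lt_of_le_of_lt hj hia)
    show G s * (p i s * w s) = G s' * (p i s' * w s')
    rw [hG fun j hj => h j (lt_trans hj hia), hw hle, hp i hle]
  simp only [hsplit]
  rw [sum_mul_prod_eq_of_dependsOn hp hsum _ (hdep hu),
    sum_mul_prod_eq_of_dependsOn hp hsum _ (hdep hv), sum_eq_inv_mul_sum_update i,
    sum_eq_inv_mul_sum_update i fun s => G s * (p i s * v s)]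
  refine mul_le_mul_of_nonneg_left (mul_le_mul_of_nonneg_left (Finset.sum_le_sum fun s _ => ?_)
    (by positivity)) (by positivity)
  simp only [hG.apply_update, ← Finset.mul_sum]
  exact mul_le_mul_of_nonneg_left (huv s) (Finset.prod_nonneg fun l _ => hp0 l s)

theorem sum_sub_eq_sub {k : ℕ} (f : Finset (Fin k) → ℝ) :
    f Finset.univ - f ∅ = ∑ j : Fin k, (f (insert j (Finset.Iio j)) - f (Finset.Iio j)) := by
  have h := Finset.sum_range_sub (fun m => f (Finset.univ.filter fun i : Fin k => i.val < m)) k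
  rw [Finset.sum_range] at h
  convert h.symm using 1
  · congr 2
    · ext i; simp
    · ext i; simp
  · refine Finset.sum_congr rfl fun j _ => ?_
    congr 2
    · ext i; simp
    · ext i; simp

end Marginalization

/-- An adaptive sequence of `k + 1` rank-one measurements with `k` intermediate states. -/
structure AdaptiveMeasurement (ι T : Type*) [Fintype ι] [DecidableEq ι] [Fintype T] (k : ℕ) where
  /-- The measurement vectors. -/
  vec : Fin (k + 1) → (Fin (k + 1) → T) → ι → ℂ
  /-- The weights of the measurement vectors. -/
  wt : Fin (k + 1) → (Fin (k + 1) → T) → ℝ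
  /-- The intermediate states. -/
  state : Fin k → (Fin (k + 1) → T) → Matrix ι ι ℂ
  unit : ∀ i s, star (vec i s) ⬝ᵥ vec i s = 1
  wt_nonneg : ∀ i s, 0 ≤ wt i s
  vec_dependsOn : ∀ i, DependsOn (vec i) (Set.Iic i)
  wt_dependsOn : ∀ i, DependsOn (wt i) (Set.Iic i)
  complete : ∀ i s, ∑ t, (wt i (Function.update s i t) : ℂ) •
    vecMulVec (vec i (Function.update s i t)) (star (vec i (Function.update s i t))) = 1
  state_posSemidef : ∀ i s, (state i s).PosSemidef
  state_trace : ∀ i s, (state i s).trace = 1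
  state_dependsOn : ∀ i, DependsOn (state i) (Set.Iic i.castSucc)

namespace AdaptiveMeasurement

variable {ι T : Type*} [Fintype ι] [DecidableEq ι] [Nonempty ι] [Fintype T] {k : ℕ}
  (M : AdaptiveMeasurement ι T k)

/-- The expectation of the `i`-th intermediate state in the next measurement vector. -/
noncomputable def expect (i : Fin k) (s : Fin (k + 1) → T) (O : unitaryGroup ι ℝ) : ℝ :=
  expVal (M.vec i.succ s) (M.state i s) O

/-- The probability of the first outcome for the standard basis state `x`. -/
noncomputable def prior (x : ι) (s : Fin (k + 1) → T) : ℝ := ‖M.vec 0 s x‖ ^ 2 * M.wt 0 s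

/-- The conditional outcome probabilities, where the state is conjugated by `O` in the rounds
belonging to `A` and maximally mixed in the others. -/
noncomputable def factor (A : Finset (Fin k)) (O : unitaryGroup ι ℝ) (i : Fin k)
    (s : Fin (k + 1) → T) : ℝ :=
  M.wt i.succ s * if i ∈ A then M.expect i s O else (Fintype.card ι : ℝ)⁻¹

/-- The joint outcome probability, where the state is conjugated by `O` in the rounds
belonging to `A` and maximally mixed in the others. -/
noncomputable def prob (x : ι) (A : Finset (Fin k)) (O : unitaryGroup ι ℝ)
    (s : Fin (k + 1) → T) : ℝ := M.prior x s * ∏ i, M.factor A O i s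

/-- The part of `prob` that does not depend on the orthogonal matrix. -/
noncomputable def coeff (x : ι) (A : Finset (Fin k)) (s : Fin (k + 1) → T) : ℝ :=
  M.prior x s * (∏ i : Fin k, M.wt i.succ s) * (Fintype.card ι : ℝ)⁻¹ ^ Aᶜ.card

theorem expect_nonneg (i : Fin k) (s : Fin (k + 1) → T) (O : unitaryGroup ι ℝ) :
    0 ≤ M.expect i s O := expVal_nonneg (M.state_posSemidef i s) _ _

theorem continuous_expect (i : Fin k) (s : Fin (k + 1) → T) : Continuous (M.expect i s) :=
  continuous_expVal _ _

theorem prior_nonneg (x : ι) (s : Fin (k + 1) → T) : 0 ≤ M.prior x s :=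
  mul_nonneg (sq_nonneg _) (M.wt_nonneg _ _)

theorem coeff_nonneg (x : ι) (A : Finset (Fin k)) (s : Fin (k + 1) → T) : 0 ≤ M.coeff x A s :=
  mul_nonneg (mul_nonneg (M.prior_nonneg x s) (Finset.prod_nonneg fun i _ => M.wt_nonneg _ _))
    (by positivity)

theorem prob_eq_coeff_mul (x : ι) (A : Finset (Fin k)) (O : unitaryGroup ι ℝ)
    (s : Fin (k + 1) → T) : M.prob x A O s = M.coeff x A s * ∏ i ∈ A, M.expect i s O := by
  simp only [prob, factor, coeff, Finset.prod_mul_distrib, Finset.prod_ite, Finset.prod_const]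
  have h1 : Finset.univ.filter (· ∈ A) = A := by ext; simp
  have h2 : Finset.univ.filter (· ∉ A) = Aᶜ := by ext; simp
  rw [h1, h2]
  ring

theorem coeff_erase {x : ι} {A : Finset (Fin k)} {i : Fin k} (hi : i ∈ A) (s : Fin (k + 1) → T) :
    M.coeff x (A.erase i) s = M.coeff x A s * (Fintype.card ι : ℝ)⁻¹ := by
  rw [coeff, coeff, Finset.compl_erase, Finset.card_insert_of_notMem (by simpa using hi), pow_succ]
  ring

theorem sum_wt_mul_quadForm (N : Matrix ι ι ℂ) (i : Fin (k + 1)) (s : Fin (k + 1) → T) :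
    ∑ t, M.wt i (Function.update s i t) * quadForm N (M.vec i (Function.update s i t))
      = N.trace.re := sum_mul_quadForm_eq_re_trace (M.complete i s) N

theorem sum_wt (i : Fin (k + 1)) (s : Fin (k + 1) → T) :
    ∑ t, M.wt i (Function.update s i t) = Fintype.card ι := by
  have h := M.sum_wt_mul_quadForm 1 i s
  simpa [quadForm, M.unit] using h

theorem sum_prior (x : ι) (s : Fin (k + 1) → T) :
    ∑ t, M.prior x (Function.update s 0 t) = 1 := by
  have h := M.sum_wt_mul_quadForm (Matrix.single x x 1) 0 s
  rw [trace_single_eq_same, Complex.one_re] at h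
  rw [← h]
  refine Finset.sum_congr rfl fun t _ => ?_
  rw [prior, mul_comm, quadForm, single_mulVec, one_mul]
  congr 1
  change _ = (star (M.vec 0 (Function.update s 0 t)) ⬝ᵥ
    Pi.single x (M.vec 0 (Function.update s 0 t) x)).re
  rw [dotProduct_single, Pi.star_apply, ← Complex.normSq_eq_norm_sq, Complex.star_def,
    ← Complex.normSq_eq_conj_mul_self, Complex.ofReal_re]

theorem sum_factor (A : Finset (Fin k)) (O : unitaryGroup ι ℝ) (i : Fin k) (s : Fin (k + 1) → T) :
    ∑ t, M.factor A O i (Function.update s i.succ t) = 1 := by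
  unfold factor
  split_ifs with h
  · have hst : ∀ t, M.state i (Function.update s i.succ t) = M.state i s := fun t =>
      ((M.state_dependsOn i).mono fun j hj => lt_of_le_of_lt hj (Fin.castSucc_lt_succ)).apply_update
        s t
    simp only [expect, expVal, hst]
    rw [M.sum_wt_mul_quadForm, trace_conj_complexify, M.state_trace, Complex.one_re]
  · rw [← Finset.sum_mul, M.sum_wt, mul_inv_cancel₀ (by simp)]

theorem expect_dependsOn (i : Fin k) (O : unitaryGroup ι ℝ) :
    DependsOn (fun s => M.expect i s O) (Set.Iic i.succ) := fun s s' h => by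
  simp only [expect]
  rw [M.vec_dependsOn _ h, M.state_dependsOn i fun j hj =>
    h j (le_trans hj (Fin.castSucc_lt_succ).le)]

theorem factor_dependsOn (A : Finset (Fin k)) (O : unitaryGroup ι ℝ) (i : Fin k) :
    DependsOn (M.factor A O i) (Set.Iic i.succ) := fun s s' h => by
  rw [factor, factor, M.wt_dependsOn _ h]
  have := M.expect_dependsOn i O h
  simp only at this
  rw [this]

theorem prior_dependsOn (x : ι) : DependsOn (M.prior x) (Set.Iic 0) := fun s s' h => by
  rw [prior, prior, M.vec_dependsOn _ h, M.wt_dependsOn _ h]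

/-- The conditional outcome probabilities of all rounds, including the first one. -/
noncomputable def round (x : ι) (A : Finset (Fin k)) (O : unitaryGroup ι ℝ) :
    Fin (k + 1) → (Fin (k + 1) → T) → ℝ := Fin.cases (M.prior x) (M.factor A O)

theorem round_dependsOn (x : ι) (A : Finset (Fin k)) (O : unitaryGroup ι ℝ) (l : Fin (k + 1)) :
    DependsOn (M.round x A O l) (Set.Iic l) := by
  cases l using Fin.cases with
  | zero => exact M.prior_dependsOn x
  | succ i => exact M.factor_dependsOn A O i

theorem sum_round (x : ι) (A : Finset (Fin k)) (O : unitaryGroup ι ℝ) (l : Fin (k + 1))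
    (s : Fin (k + 1) → T) : ∑ t, M.round x A O l (Function.update s l t) = 1 := by
  cases l using Fin.cases with
  | zero => exact M.sum_prior x s
  | succ i => exact M.sum_factor A O i s

theorem round_nonneg (x : ι) (A : Finset (Fin k)) (O : unitaryGroup ι ℝ) (l : Fin (k + 1))
    (s : Fin (k + 1) → T) : 0 ≤ M.round x A O l s := by
  cases l using Fin.cases with
  | zero => exact M.prior_nonneg x s
  | succ i =>
    refine mul_nonneg (M.wt_nonneg _ _) ?_
    split_ifs
    · exact M.expect_nonneg i s O
    · positivity

theorem prod_round (x : ι) (A : Finset (Fin k)) (O : unitaryGroup ι ℝ) (s : Fin (k + 1) → T) :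
    ∏ l, M.round x A O l s = M.prob x A O s := by
  rw [Fin.prod_univ_succ]
  rfl

theorem sum_prob [Nonempty T] (x : ι) (A : Finset (Fin k)) (O : unitaryGroup ι ℝ) :
    ∑ s, M.prob x A O s = 1 := by
  simp only [← M.prod_round]
  exact sum_prod_eq_one (M.round_dependsOn x A O) (M.sum_round x A O)

theorem coeff_eq_pow_mul (x : ι) (A : Finset (Fin k)) (s : Fin (k + 1) → T) :
    M.coeff x A s = (Fintype.card ι : ℝ) ^ A.card * M.coeff x ∅ s := by
  have hD : (Fintype.card ι : ℝ) ≠ 0 := by simp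
  induction A using Finset.induction_on with
  | empty => simp
  | insert a A ha ih =>
    have h := M.coeff_erase (x := x) (Finset.mem_insert_self a A) s
    rw [Finset.erase_insert ha, ih] at h
    rw [Finset.card_insert_of_notMem ha, pow_succ', mul_assoc, h]
    field_simp

end AdaptiveMeasurement

namespace AdaptiveMeasurement

variable {ι T : Type*} [Fintype ι] [DecidableEq ι] [Nonempty ι] [Fintype T] [Nonempty T] {k : ℕ}
  (M : AdaptiveMeasurement ι T k) (μ : Measure (unitaryGroup ι ℝ)) [μ.IsHaarMeasure]
  [IsProbabilityMeasure μ]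

theorem exists_projection_dependsOn (j : Fin k) :
    ∃ P : (Fin (k + 1) → T) → Matrix ι ι ℝ, DependsOn P (Set.Iio j.succ) ∧
      ∀ s, (P s)ᵀ = P s ∧ P s * P s = P s ∧
        (∀ i ∈ Finset.Iio j, (P s).map Complex.ofReal *ᵥ M.vec i.succ s = M.vec i.succ s) ∧
        (P s).trace ≤ 2 * (j : ℝ) := by
  choose Q hQT hQQ hQy hQtr using fun s : Fin (k + 1) → T =>
    exists_projection (Finset.Iio j) fun i : Fin k => M.vec i.succ s
  let r : (Fin (k + 1) → T) → Fin (k + 1) → T := fun s l =>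
    if l < j.succ then s l else Classical.arbitrary T
  refine ⟨fun s => Q (r s), fun s s' h => ?_, fun s => ⟨hQT _, hQQ _, fun i hi => ?_, ?_⟩⟩
  · have : r s = r s' := by
      funext l
      by_cases hl : l < j.succ
      · simp only [r, if_pos hl]; exact h l hl
      · simp only [r, if_neg hl]
    simp only [this]
  · have : M.vec i.succ (r s) = M.vec i.succ s := M.vec_dependsOn _ fun l hl =>
      if_pos (lt_of_le_of_lt hl (Fin.succ_lt_succ_iff.mpr (Finset.mem_Iio.mp hi)))
    rw [← this]
    exact hQy _ i hi
  · simpa using hQtr (r s)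

theorem continuous_prod_expect (A : Finset (Fin k)) (s : Fin (k + 1) → T) :
    Continuous fun O => ∏ i ∈ A, M.expect i s O :=
  continuous_finsetProd _ fun i _ => M.continuous_expect i s

theorem sum_coeff_mul_integral (x : ι) (A : Finset (Fin k)) :
    ∑ s, M.coeff x A s * ∫ O, ∏ i ∈ A, M.expect i s O ∂μ = 1 := by
  simp only [← integral_const_mul]
  rw [← integral_finsetSum (f := fun s O => M.coeff x A s * ∏ i ∈ A, M.expect i s O) _
    fun s _ => ((M.continuous_prod_expect A s).integrable_of_hasCompactSupport
      (HasCompactSupport.of_compactSpace _)).const_mul _]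
  simp only [← M.prob_eq_coeff_mul, M.sum_prob]
  simp

theorem card_mul_sum_coeff_mul_integral_le (x : ι) {j : Fin k}
    {P : (Fin (k + 1) → T) → Matrix ι ι ℝ} (hPT : ∀ s, (P s)ᵀ = P s)
    (hPP : ∀ s, P s * P s = P s)
    (hPy : ∀ s, ∀ i ∈ Finset.Iio j, (P s).map Complex.ofReal *ᵥ M.vec i.succ s = M.vec i.succ s)
    (hPtr : ∀ s, (P s).trace ≤ 2 * (j : ℝ)) (A : Finset (Fin k)) (hA : A ⊆ Finset.Iio j) :
    Fintype.card ι * ∑ s, M.coeff x A s * ∫ O, (∏ i ∈ A, M.expect i s O) *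
      (conjPairing ((P s).map Complex.ofReal) (M.state j s) O).re ∂μ ≤ 8 * ((j : ℝ) + 1) ^ 2 := by
  induction A using Finset.strongInduction with
  | H A ih =>
    set c : ℝ := 2 * ((j : ℝ) + 1) with hc
    have hc0 : 0 < c := by positivity
    set w : (Fin (k + 1) → T) → ℝ := fun s => ∫ O, ∏ i ∈ A, M.expect i s O ∂μ with hw
    set b : Finset (Fin k) → (Fin (k + 1) → T) → ℝ := fun A s =>
      ∫ O, (∏ i ∈ A, M.expect i s O) *
        (conjPairing ((P s).map Complex.ofReal) (M.state j s) O).re ∂μ with hb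
    have hw0 : ∀ s, 0 ≤ w s := fun s => integral_nonneg fun O =>
      Finset.prod_nonneg fun i _ => M.expect_nonneg i s O
    have h1 : ∀ s, Fintype.card ι * b A s
        ≤ 2 * (j : ℝ) * w s + ∑ i ∈ A, (c * w s + b (A.erase i) s / c) := by
      intro s
      refine (card_mul_integral_prod_expVal_mul_le μ A (y := fun i => M.vec i.succ s)
        (σ := fun i => M.state i s) hc0 (fun i _ => M.unit _ _)
        (fun i _ => ⟨M.state_posSemidef i s, M.state_trace i s⟩) (M.state_posSemidef j s)
        (M.state_trace j s) (hPT s) (hPP s) fun i hi => hPy s i (hA hi)).trans ?_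
      exact add_le_add_left (mul_le_mul_of_nonneg_right (hPtr s) (hw0 s)) _
    have h2 : ∑ s, M.coeff x A s * w s = 1 := M.sum_coeff_mul_integral μ x A
    have hcard : (A.card : ℝ) ≤ j := by
      have := Finset.card_le_card hA
      rw [Fin.card_Iio] at this
      exact_mod_cast this
    calc Fintype.card ι * ∑ s, M.coeff x A s * b A s
        = ∑ s, M.coeff x A s * (Fintype.card ι * b A s) := by
          rw [Finset.mul_sum]
          exact Finset.sum_congr rfl fun s _ => by ring
      _ ≤ ∑ s, M.coeff x A s * (2 * (j : ℝ) * w s + ∑ i ∈ A, (c * w s + b (A.erase i) s / c)) :=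
          Finset.sum_le_sum fun s _ => mul_le_mul_of_nonneg_left (h1 s) (M.coeff_nonneg x A s)
      _ = 2 * (j : ℝ) * ∑ s, M.coeff x A s * w s + ∑ i ∈ A, (c * ∑ s, M.coeff x A s * w s
            + (∑ s, M.coeff x A s * b (A.erase i) s) / c) := by
          simp only [mul_add, Finset.mul_sum, Finset.sum_add_distrib, Finset.sum_div]
          rw [Finset.sum_comm (s := Finset.univ) (t := A),
            Finset.sum_comm (s := Finset.univ) (t := A)]
          congr 1
          · exact Finset.sum_congr rfl fun s _ => by ring
          · congr 1 <;>
              exact Finset.sum_congr rfl fun i _ => Finset.sum_congr rfl fun s _ => by ring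
      _ ≤ 2 * (j : ℝ) * 1 + ∑ i ∈ A, (c * 1 + 8 * ((j : ℝ) + 1) ^ 2 / c) := by
          rw [h2]
          gcongr with i hi
          have h3 := ih (A.erase i) (Finset.erase_ssubset hi) ((Finset.erase_subset i A).trans hA)
          refine le_trans (le_of_eq ?_) h3
          rw [Finset.mul_sum]
          refine Finset.sum_congr rfl fun s _ => ?_
          rw [M.coeff_erase hi]
          have hD : (Fintype.card ι : ℝ) ≠ 0 := by simp
          simp only [hb]
          field_simp
      _ = 2 * (j : ℝ) + A.card * (6 * ((j : ℝ) + 1)) := by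
          rw [Finset.sum_const, nsmul_eq_mul, hc]
          field_simp
          ring
      _ ≤ 8 * ((j : ℝ) + 1) ^ 2 := by
          have : (A.card : ℝ) * (6 * ((j : ℝ) + 1)) ≤ j * (6 * ((j : ℝ) + 1)) := by gcongr
          have hj : (0 : ℝ) ≤ j := by positivity
          nlinarith

theorem sum_abs_coeff_insert_sub_le (x : ι) (j : Fin k)
    (hj : 4 * (j : ℝ) ≤ Fintype.card ι) :
    ∑ s, |M.coeff x (insert j (Finset.Iio j)) s *
          ∫ O, ∏ i ∈ insert j (Finset.Iio j), M.expect i s O ∂μ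
        - M.coeff x (Finset.Iio j) s * ∫ O, ∏ i ∈ Finset.Iio j, M.expect i s O ∂μ|
      ≤ 24 * ((j : ℝ) + 1) ^ 2 / Fintype.card ι := by
  obtain ⟨P, hPd, hP⟩ := M.exists_projection_dependsOn j
  set D : ℝ := (Fintype.card ι : ℝ) with hD
  have hD0 : 0 < D := by rw [hD]; exact_mod_cast Fintype.card_pos
  set W : (Fin (k + 1) → T) → unitaryGroup ι ℝ → ℝ := fun s O =>
    ∏ i ∈ Finset.Iio j, M.expect i s O with hWdef
  set b : (Fin (k + 1) → T) → ℝ := fun s => ∫ O, W s O *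
    (conjPairing ((P s).map Complex.ofReal) (M.state j s) O).re ∂μ with hb
  set w : (Fin (k + 1) → T) → ℝ := fun s => ∫ O, W s O ∂μ with hw
  set u : (Fin (k + 1) → T) → ℝ := fun s =>
    |∫ O, W s O * M.expect j s O ∂μ - w s / D| with hu
  set v : (Fin (k + 1) → T) → ℝ := fun s => (2 * b s + 8 * j * w s / D) / D with hv
  have hWc : ∀ s, Continuous (W s) := M.continuous_prod_expect _
  have hW0 : ∀ s O, 0 ≤ W s O := fun s O => Finset.prod_nonneg fun i _ => M.expect_nonneg i s O
  have hw0 : ∀ s, 0 ≤ w s := fun s => integral_nonneg (hW0 s)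
  have hWd : DependsOn W (Set.Iio j.succ) := fun s s' h => by
    funext O
    refine Finset.prod_congr rfl fun i hi => M.expect_dependsOn i O fun l hl => h l ?_
    exact lt_of_le_of_lt hl (Fin.succ_lt_succ_iff.mpr (Finset.mem_Iio.mp hi))
  have hsd : DependsOn (M.state j) (Set.Iio j.succ) :=
    (M.state_dependsOn j).mono fun l hl => lt_of_le_of_lt hl Fin.castSucc_lt_succ
  have hwd : DependsOn w (Set.Iio j.succ) := fun s s' h => by simp only [hw, hWd h]
  have hvd : DependsOn v (Set.Iio j.succ) := fun s s' h => by
    simp only [hv, hb, hwd h, hWd h, hPd h, hsd h]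
  have hud : DependsOn u (Set.Iic j.succ) := fun s s' h => by
    have h' : ∀ l ∈ Set.Iio j.succ, s l = s' l := fun l hl => h l (Set.Iio_subset_Iic_self hl)
    have h1 : ∀ O, M.expect j s O = M.expect j s' O := fun O => M.expect_dependsOn j O h
    simp only [hu, hwd h', hWd h', h1]
  have key : ∀ s, ∑ t, M.wt j.succ (Function.update s j.succ t) * u (Function.update s j.succ t)
      ≤ 2 * b s + 8 * j * w s / D := by
    intro s
    obtain ⟨hPT, hPP, hPy, hPtr⟩ := hP s
    have h := sum_abs_integral_mul_expVal_sub_le μ (hWc s) (hW0 s) hPT hPP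
      (fun z hz O => Finset.prod_congr rfl fun i hi => expVal_mul_left _ _ _ _
        (complexify_reflectionUnitary_mulVec hPT hz (hPy i hi)))
      (by linarith) (M.state_posSemidef j s) (M.state_trace j s)
      (lam := fun t => M.wt j.succ (Function.update s j.succ t)) (fun t => M.wt_nonneg _ _)
      (y := fun t => M.vec j.succ (Function.update s j.succ t)) (fun t => M.unit _ _)
      (M.complete j.succ s)
    have e : ∀ t, u (Function.update s j.succ t) = |∫ O, W s O *
        expVal (M.vec j.succ (Function.update s j.succ t)) (M.state j s) O ∂μ - w s / D| := by
      intro t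
      simp only [hu, expect, hWd.apply_update, hwd.apply_update, hsd.apply_update]
    simp only [e]
    refine h.trans (add_le_add_right ?_ _)
    have := mul_le_mul_of_nonneg_right hPtr (hw0 s)
    exact div_le_div_of_nonneg_right (by linarith) hD0.le
  have hround : ∀ s, M.round x ∅ 1 j.succ s = M.wt j.succ s * D⁻¹ := fun s => by
    simp [round, factor, hD]
  have hmain := sum_prod_mul_le_sum_prod_mul (M.round_nonneg x ∅ 1) (M.round_dependsOn x ∅ 1)
    (M.sum_round x ∅ 1) hud (hvd.mono Set.Iio_subset_Iic_self) fun s => by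
      simp only [hround, hvd.apply_update, mul_right_comm _ D⁻¹]
      rw [← Finset.sum_mul, ← Finset.sum_mul, ← Finset.sum_mul, M.sum_wt]
      refine mul_le_mul_of_nonneg_right ((key s).trans (le_of_eq ?_)) (by positivity)
      rw [← hD]
      simp only [hv]
      field_simp
  have hprod : ∀ s, ∏ l, M.round x ∅ 1 l s = M.coeff x ∅ s := fun s => by
    rw [M.prod_round, M.prob_eq_coeff_mul, Finset.prod_empty, mul_one]
  simp only [hprod] at hmain
  have hpow : 0 ≤ D ^ ((j : ℕ) + 1) := by positivity
  have hB := M.card_mul_sum_coeff_mul_integral_le μ x (fun s => (hP s).1) (fun s => (hP s).2.1)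
    (fun s => (hP s).2.2.1) (fun s => (hP s).2.2.2) _ subset_rfl
  have hone := M.sum_coeff_mul_integral μ x (Finset.Iio j)
  have hcj : ∀ s, M.coeff x (Finset.Iio j) s = D ^ (j : ℕ) * M.coeff x ∅ s := fun s => by
    rw [M.coeff_eq_pow_mul, Fin.card_Iio]
  calc _ = D ^ ((j : ℕ) + 1) * ∑ s, M.coeff x ∅ s * u s := by
        rw [Finset.mul_sum]
        refine Finset.sum_congr rfl fun s _ => ?_
        have hintegral : ∫ O, ∏ i ∈ insert j (Finset.Iio j), M.expect i s O ∂μ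
            = ∫ O, W s O * M.expect j s O ∂μ :=
          integral_congr_ae (Filter.Eventually.of_forall fun O => by
            simp only [hWdef]
            rw [Finset.prod_insert (by simp), mul_comm])
        rw [hcj, M.coeff_eq_pow_mul x (insert j _), Finset.card_insert_of_notMem (by simp),
          Fin.card_Iio, hintegral]
        have : D ^ ((j : ℕ) + 1) * M.coeff x ∅ s * ∫ O, W s O * M.expect j s O ∂μ
            - D ^ (j : ℕ) * M.coeff x ∅ s * w s
            = D ^ ((j : ℕ) + 1) * M.coeff x ∅ s *
              (∫ O, W s O * M.expect j s O ∂μ - w s / D) := by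
          rw [pow_succ]
          field_simp
        rw [this, abs_mul, abs_of_nonneg (mul_nonneg hpow (M.coeff_nonneg x ∅ s)), mul_assoc]
    _ ≤ D ^ ((j : ℕ) + 1) * ∑ s, M.coeff x ∅ s * v s := mul_le_mul_of_nonneg_left hmain hpow
    _ = (2 * (D * ∑ s, M.coeff x (Finset.Iio j) s * b s)
          + 8 * j * ∑ s, M.coeff x (Finset.Iio j) s * w s) / D := by
        simp only [hcj, hv, Finset.mul_sum, ← Finset.sum_add_distrib, Finset.sum_div]
        refine Finset.sum_congr rfl fun s _ => ?_
        field_simp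
        ring
    _ ≤ 24 * ((j : ℝ) + 1) ^ 2 / D := by
        refine div_le_div_of_nonneg_right ?_ hD0.le
        have hj0 : (0 : ℝ) ≤ j := by positivity
        nlinarith

theorem sum_abs_coeff_sub_le (x : ι) (hk : 4 * (k : ℝ) ≤ Fintype.card ι) :
    ∑ s, |M.coeff x ∅ s - M.coeff x Finset.univ s * ∫ O, ∏ i, M.expect i s O ∂μ|
      ≤ 24 * (k : ℝ) ^ 3 / Fintype.card ι := by
  set f : (Fin (k + 1) → T) → Finset (Fin k) → ℝ := fun s A =>
    M.coeff x A s * ∫ O, ∏ i ∈ A, M.expect i s O ∂μ with hf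
  calc _ ≤ ∑ s, ∑ j : Fin k, |f s (insert j (Finset.Iio j)) - f s (Finset.Iio j)| := by
        refine Finset.sum_le_sum fun s _ => ?_
        have h : f s ∅ = M.coeff x ∅ s := by simp [hf]
        rw [← h, abs_sub_comm]
        change |f s Finset.univ - f s ∅| ≤ _
        rw [sum_sub_eq_sub]
        exact Finset.abs_sum_le_sum_abs _ _
    _ = ∑ j : Fin k, ∑ s, |f s (insert j (Finset.Iio j)) - f s (Finset.Iio j)| := Finset.sum_comm
    _ ≤ ∑ _j : Fin k, 24 * (k : ℝ) ^ 2 / Fintype.card ι := by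
        refine Finset.sum_le_sum fun j _ => ?_
        have hjk : (j : ℝ) + 1 ≤ k := by exact_mod_cast j.2
        refine (M.sum_abs_coeff_insert_sub_le μ x j (by linarith)).trans ?_
        gcongr
    _ = 24 * (k : ℝ) ^ 3 / Fintype.card ι := by
        rw [Finset.sum_const, Finset.card_univ, Fintype.card_fin, nsmul_eq_mul]
        ring

end AdaptiveMeasurement

/-- (Lemma 4.2 of the paper, orthogonal case.)  For the adaptive simple
measurement data `y, λ, σ` on `ℓ` qubits (`D = 2^ℓ`), if `k < (2^ℓ/12)^{2/7}` then the
distribution `Q_k^O(s) = Pr(s₀) ∫_{O(D)} ∏_{i=1}^k ⟨y^i|O σ^{i−1} Oᵀ|y^i⟩ λ^i dO` (Haar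
measure on the real orthogonal group `O(D)`, acting on `ℂ^D` via inclusion of real matrices)
is close in total variation to `P_k(s) = Pr(s₀) D^{−k} ∏_{i=1}^k λ^i`:
`∑_s |P_k(s) − Q_k^O(s)| ≤ C k³/2^ℓ` for a universal constant `C > 0`. -/
theorem simple_measurement_tvd_orthogonal :
    ∃ C : ℝ, 0 < C ∧
      ∀ (ℓ k Dm : ℕ), 1 ≤ ℓ → 1 ≤ k → 1 ≤ Dm →
      (k : ℝ) < ((2 : ℝ) ^ ℓ / 12) ^ ((2 : ℝ) / 7) →
      ∀ (y : Fin (k + 1) → (Fin (k + 1) → Fin Dm) → (Fin (2 ^ ℓ) → ℂ))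
        (lam : Fin (k + 1) → (Fin (k + 1) → Fin Dm) → ℝ)
        (sig : Fin k → (Fin (k + 1) → Fin Dm) → Matrix (Fin (2 ^ ℓ)) (Fin (2 ^ ℓ)) ℂ),
      (∀ i s, ∑ x, ‖y i s x‖ ^ 2 = 1) →
      (∀ i s, 0 < lam i s ∧ lam i s ≤ 1) →
      (∀ (i : Fin (k + 1)) (s s' : Fin (k + 1) → Fin Dm),
        (∀ j, j ≤ i → s j = s' j) → y i s = y i s') →
      (∀ (i : Fin (k + 1)) (s s' : Fin (k + 1) → Fin Dm),
        (∀ j, j ≤ i → s j = s' j) → lam i s = lam i s') →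
      (∀ (i : Fin (k + 1)) (s : Fin (k + 1) → Fin Dm),
        ∑ t : Fin Dm, (lam i (Function.update s i t) : ℂ) •
            Matrix.vecMulVec (y i (Function.update s i t)) (star (y i (Function.update s i t)))
          = (1 : Matrix (Fin (2 ^ ℓ)) (Fin (2 ^ ℓ)) ℂ)) →
      (∀ (i : Fin k) (s : Fin (k + 1) → Fin Dm),
        (sig i s).PosSemidef ∧ (sig i s).trace = 1) →
      (∀ (i : Fin k) (s s' : Fin (k + 1) → Fin Dm),
        (∀ j, j ≤ i.castSucc → s j = s' j) → sig i s = sig i s') →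
      ∀ (μ : Measure ↥(Matrix.unitaryGroup (Fin (2 ^ ℓ)) ℝ)),
        μ.IsHaarMeasure → IsProbabilityMeasure μ →
      ∑ s : Fin (k + 1) → Fin Dm,
        ‖((((‖y 0 s 0‖ ^ 2 * lam 0 s) * (((2 : ℝ) ^ ℓ) ^ k)⁻¹ *
              ∏ i : Fin k, lam i.succ s : ℝ)) : ℂ)
          - ((‖y 0 s 0‖ ^ 2 * lam 0 s : ℝ) : ℂ) *
              ∫ O : ↥(Matrix.unitaryGroup (Fin (2 ^ ℓ)) ℝ),
                ∏ i : Fin k,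
                  (star (y i.succ s) ⬝ᵥ
                      (((O.1.map Complex.ofReal) * sig i s * (O.1.map Complex.ofReal)ᵀ) *ᵥ
                        y i.succ s) *
                    (lam i.succ s : ℂ)) ∂μ‖
        ≤ C * (k : ℝ) ^ 3 / (2 : ℝ) ^ ℓ := by
  refine ⟨24, by norm_num, ?_⟩
  intro ℓ k Dm _ hk hDm hkD y lam sig hy hlam hyd hld hcomp hsig hsd μ hμ hμ1
  have : NeZero Dm := ⟨by omega⟩
  let M : AdaptiveMeasurement (Fin (2 ^ ℓ)) (Fin Dm) k :=
    { vec := y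
      wt := lam
      state := sig
      unit := fun i s => by
        have h : star (y i s) ⬝ᵥ y i s = ((∑ x, ‖y i s x‖ ^ 2 : ℝ) : ℂ) := by
          rw [Complex.ofReal_sum]
          refine Finset.sum_congr rfl fun x _ => ?_
          rw [Pi.star_apply, Complex.star_def, Complex.conj_mul', Complex.ofReal_pow]
        rw [h, hy, Complex.ofReal_one]
      wt_nonneg := fun i s => (hlam i s).1.le
      vec_dependsOn := fun i s s' h => hyd i s s' h
      wt_dependsOn := fun i s s' h => hld i s s' h
      complete := hcomp
      state_posSemidef := fun i s => (hsig i s).1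
      state_trace := fun i s => (hsig i s).2
      state_dependsOn := fun i s s' h => hsd i s s' h }
  have hcard : (Fintype.card (Fin (2 ^ ℓ)) : ℝ) = 2 ^ ℓ := by simp
  have hbound : 4 * (k : ℝ) ≤ Fintype.card (Fin (2 ^ ℓ)) := by
    rw [hcard]
    set a : ℝ := 2 ^ ℓ / 12 with ha
    have ha0 : 0 < a := by positivity
    have hk1 : (1 : ℝ) ≤ k := by exact_mod_cast hk
    have ha1 : 1 ≤ a := by
      by_contra! h
      exact absurd (Real.rpow_le_one ha0.le h.le (by norm_num : (0 : ℝ) ≤ 2 / 7)) (by linarith)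
    have := Real.rpow_le_rpow_of_exponent_le ha1 (by norm_num : (2 : ℝ) / 7 ≤ 1)
    rw [Real.rpow_one] at this
    linarith
  have hmain := M.sum_abs_coeff_sub_le μ 0 hbound
  rw [hcard] at hmain
  refine le_trans (le_of_eq (Finset.sum_congr rfl fun s _ => ?_)) hmain
  have hintegral : ∀ O : unitaryGroup (Fin (2 ^ ℓ)) ℝ, ∏ i : Fin k,
      (star (y i.succ s) ⬝ᵥ (((O.1.map Complex.ofReal) * sig i s * (O.1.map Complex.ofReal)ᵀ) *ᵥ
        y i.succ s) * (lam i.succ s : ℂ))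
      = (((∏ i : Fin k, lam i.succ s) * ∏ i, M.expect i s O : ℝ) : ℂ) := by
    intro O
    rw [mul_comm, ← Finset.prod_mul_distrib, Complex.ofReal_prod]
    refine Finset.prod_congr rfl fun i _ => ?_
    rw [Complex.ofReal_mul]
    exact congrArg (· * (lam i.succ s : ℂ)) (dotProduct_conj_eq_expVal (hsig i s).1 (y i.succ s) O)
  simp only [hintegral]
  rw [integral_complex_ofReal, integral_const_mul, ← Complex.ofReal_mul, ← Complex.ofReal_sub,
    Complex.norm_real, Real.norm_eq_abs]
  have h1 : M.coeff 0 ∅ s = ‖y 0 s 0‖ ^ 2 * lam 0 s * (((2 : ℝ) ^ ℓ) ^ k)⁻¹ *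
      ∏ i : Fin k, lam i.succ s := by
    rw [AdaptiveMeasurement.coeff, hcard, Finset.compl_empty, Finset.card_univ, Fintype.card_fin,
      inv_pow]
    exact mul_right_comm _ _ _
  have h2 : M.coeff 0 Finset.univ s = ‖y 0 s 0‖ ^ 2 * lam 0 s * ∏ i : Fin k, lam i.succ s := by
    rw [AdaptiveMeasurement.coeff, Finset.compl_univ, Finset.card_empty, pow_zero, mul_one]
    rfl
  rw [h1, h2]
  congr 2
  ring
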